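/- arXiv:2110.00515 — 2 statements merged into one kernel-verified Lean document; each statement's English description precedes it below -/
import Mathlib

section
/- For every elliptic curve E defined over the field ℚ of rational numbers, the abelian group E(ℚ) of rational points of E is finitely generated (Mordell's theorem). -/
/-!
The naïve height `h(P) = log H(x(P))` satisfies the parallelogram law up to `O(1)`, because the
unordered pair `x(P + Q), x(P - Q)` is given by quadratic forms in the symmetric functions of
`x(P), x(Q)`. Since only finitely many points have height below a given bound, descent reduces the
theorem to the finiteness of `E(K) / 2E(K)`.

Over the field generated by the roots `e₀, e₁, e₂` of the `2`-torsion polynomial, a point `(x, y)`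
is a double as soon as every `x - eᵢ` is a square, and a line meeting the curve in `P, Q, R` makes
`(x(P) - eᵢ)(x(Q) - eᵢ)(x(R) - eᵢ)` a square. So `P ≡ Q` modulo `2E(K)` as soon as `x(P) - eᵢ` and
`x(Q) - eᵢ` have the same square classes. These classes have even valuation away from the finitely
many primes where some `eᵢ` is not integral or some `eᵢ - eⱼ` is not a unit, so they lie in a Selmer
group, which is finite by the finiteness of the class group and Dirichlet's unit theorem. Finally,
subgroups of finitely generated abelian groups are finitely generated, so the splitting field may be
adjoined.
-/

namespace MordellWeil

open WeierstrassCurve WeierstrassCurve.Affine Height IsDedekindDomain FractionalIdeal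
open scoped nonZeroDivisors

/-! ### Heights -/

section AddSubMap

lemma eval_addSubMap {R : Type*} [CommRing R] (W : WeierstrassCurve R) (s t u : R) :
    (fun i ↦ (addSubMap W i).eval ![s, t, u]) =
      ![s ^ 2 - W.b₄ * s * u - W.b₆ * t * u - W.b₈ * u ^ 2,
        2 * t * s + W.b₂ * s * u + W.b₄ * t * u + W.b₆ * u ^ 2,
        t ^ 2 - 4 * s * u] := by
  ext i
  fin_cases i <;> simp [addSubMap]

variable {K : Type*} [Field K] {W : Affine K}

/-- Modulo the Weierstrass equation, the duplication formula: `2y + a₁x + a₃` and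
`3x² + 2a₂x + a₄ - a₁y` are the denominator and the numerator of the slope of the tangent line. -/
lemma eval_addSubMap_self {x y : K} (h : W.Nonsingular x y) :
    (fun i ↦ (addSubMap W i).eval ((Point.some x y h).sym2x (.some x y h))) =
      ![(3 * x ^ 2 + 2 * W.a₂ * x + W.a₄ - W.a₁ * y) ^ 2
          + W.a₁ * (3 * x ^ 2 + 2 * W.a₂ * x + W.a₄ - W.a₁ * y) * (2 * y + W.a₁ * x + W.a₃)
          - (W.a₂ + 2 * x) * (2 * y + W.a₁ * x + W.a₃) ^ 2,
        (2 * y + W.a₁ * x + W.a₃) ^ 2, 0] := by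
  have heq := (equation_iff ..).mp h.1
  rw [Point.sym2x_some_some, eval_addSubMap]
  congrm ![?_, ?_, ?_]
  · simp only [b₄, b₆, b₈]
    linear_combination (W.a₁ ^ 2 + 4 * W.a₂ + 8 * x) * heq
  · simp only [b₂, b₄, b₆]
    linear_combination -4 * heq
  · ring

variable [DecidableEq K]

lemma exists_eval_addSubMap_sym2x_self (P : W.Point) :
    ∃ c : K, c ≠ 0 ∧ (fun i ↦ (addSubMap W i).eval (P.sym2x P)) = c • (P + P).sym2x (P - P) := by
  match P with
  | 0 => exact ⟨1, one_ne_zero, by simp [eval_addSubMap]⟩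
  | .some x y h =>
    rw [eval_addSubMap_self, sub_self]
    have hψ : y - W.negY x y = 2 * y + W.a₁ * x + W.a₃ := by rw [negY]; ring
    by_cases hy : y = W.negY x y
    · have hψ₀ : 2 * y + W.a₁ * x + W.a₃ = 0 := by rw [← hψ, sub_eq_zero.mpr hy]
      have hν : 3 * x ^ 2 + 2 * W.a₂ * x + W.a₄ - W.a₁ * y ≠ 0 := fun hν ↦
        ((nonsingular_iff ..).mp h).2.elim (fun h ↦ h (by linear_combination -hν))
          fun h ↦ h hy
      refine ⟨_, pow_ne_zero 2 hν, ?_⟩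
      rw [Point.add_self_of_Y_eq hy, Point.sym2x_zero_zero, hψ₀]
      simp
    · have hψ₀ : 2 * y + W.a₁ * x + W.a₃ ≠ 0 := hψ ▸ sub_ne_zero.mpr hy
      refine ⟨_, pow_ne_zero 2 hψ₀, ?_⟩
      rw [Point.add_self_of_Y_ne hy, Point.sym2x_some_zero, addX, slope_of_Y_ne rfl hy, hψ]
      simp only [Matrix.smul_cons, smul_eq_mul, mul_one, mul_zero, Matrix.smul_empty]
      generalize 2 * y + W.a₁ * x + W.a₃ = ψ at hψ₀ ⊢
      congrm ![?_, _, _]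
      field_simp
      ring

section Chord

variable {x₁ y₁ x₂ y₂ : K}

lemma slope_mul_sub (hx : x₁ ≠ x₂) : W.slope x₁ x₂ y₁ y₂ * (x₁ - x₂) = y₁ - y₂ := by
  rw [slope_of_X_ne hx, div_mul_cancel₀ _ (sub_ne_zero.mpr hx)]

lemma slope_negY_mul_sub (hx : x₁ ≠ x₂) :
    W.slope x₁ x₂ y₁ (W.negY x₂ y₂) * (x₁ - x₂) = y₁ + y₂ + W.a₁ * x₂ + W.a₃ := by
  rw [slope_mul_sub hx, negY]
  ring

lemma slope_mul_slope_negY_mul_sub (h₁ : W.Equation x₁ y₁) (h₂ : W.Equation x₂ y₂)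
    (hx : x₁ ≠ x₂) :
    W.slope x₁ x₂ y₁ y₂ * W.slope x₁ x₂ y₁ (W.negY x₂ y₂) * (x₁ - x₂) =
      x₁ ^ 2 + x₁ * x₂ + x₂ ^ 2 + W.a₂ * (x₁ + x₂) + W.a₄ - W.a₁ * y₁ := by
  have hl := slope_mul_sub (W := W) (y₁ := y₁) (y₂ := y₂) hx
  have hm := slope_negY_mul_sub (W := W) (y₁ := y₁) (y₂ := y₂) hx
  rw [equation_iff] at h₁ h₂
  apply mul_right_cancel₀ (sub_ne_zero.mpr hx)
  linear_combination W.slope x₁ x₂ y₁ (W.negY x₂ y₂) * (x₁ - x₂) * hl + (y₁ - y₂) * hm + h₁ - h₂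

lemma sub_sq_mul_addX_add_addX (h₁ : W.Equation x₁ y₁) (h₂ : W.Equation x₂ y₂) (hx : x₁ ≠ x₂) :
    (x₁ - x₂) ^ 2 * (W.addX x₁ x₂ (W.slope x₁ x₂ y₁ y₂)
        + W.addX x₁ x₂ (W.slope x₁ x₂ y₁ (W.negY x₂ y₂))) =
      2 * (x₁ + x₂) * (x₁ * x₂) + W.b₂ * (x₁ * x₂) + W.b₄ * (x₁ + x₂) + W.b₆ := by
  have hl := slope_mul_sub (W := W) (y₁ := y₁) (y₂ := y₂) hx
  have hm := slope_negY_mul_sub (W := W) (y₁ := y₁) (y₂ := y₂) hx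
  rw [equation_iff] at h₁ h₂
  rw [addX, addX]
  set l := W.slope x₁ x₂ y₁ y₂
  set m := W.slope x₁ x₂ y₁ (W.negY x₂ y₂)
  calc _ = (l * (x₁ - x₂)) ^ 2 + (m * (x₁ - x₂)) ^ 2
          + W.a₁ * (x₁ - x₂) * (l * (x₁ - x₂) + m * (x₁ - x₂))
          - 2 * (W.a₂ + x₁ + x₂) * (x₁ - x₂) ^ 2 := by ring
    _ = _ := by
      rw [hl, hm, b₂, b₄, b₆]
      linear_combination 2 * h₁ + 2 * h₂

lemma sub_sq_mul_addX_mul_addX (h₁ : W.Equation x₁ y₁) (h₂ : W.Equation x₂ y₂) (hx : x₁ ≠ x₂) :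
    (x₁ - x₂) ^ 2 * (W.addX x₁ x₂ (W.slope x₁ x₂ y₁ y₂)
        * W.addX x₁ x₂ (W.slope x₁ x₂ y₁ (W.negY x₂ y₂))) =
      (x₁ * x₂) ^ 2 - W.b₄ * (x₁ * x₂) - W.b₆ * (x₁ + x₂) - W.b₈ := by
  have hl := slope_mul_sub (W := W) (y₁ := y₁) (y₂ := y₂) hx
  have hm := slope_negY_mul_sub (W := W) (y₁ := y₁) (y₂ := y₂) hx
  have hlm := slope_mul_slope_negY_mul_sub h₁ h₂ hx
  rw [equation_iff] at h₁ h₂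
  rw [addX, addX]
  set l := W.slope x₁ x₂ y₁ y₂
  set m := W.slope x₁ x₂ y₁ (W.negY x₂ y₂)
  calc _ = (l * m * (x₁ - x₂)) ^ 2
          + W.a₁ * (l * m * (x₁ - x₂)) * (l * (x₁ - x₂) + m * (x₁ - x₂) + W.a₁ * (x₁ - x₂))
          - (W.a₂ + x₁ + x₂) * ((l * (x₁ - x₂)) ^ 2 + (m * (x₁ - x₂)) ^ 2
            + W.a₁ * (x₁ - x₂) * (l * (x₁ - x₂) + m * (x₁ - x₂)))
          + (W.a₂ + x₁ + x₂) ^ 2 * (x₁ - x₂) ^ 2 := by ring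
    _ = _ := by
      rw [hlm, hl, hm, b₄, b₆, b₈]
      linear_combination -(W.a₁ ^ 2 + 2 * (W.a₂ + x₁ + x₂)) * h₁ - 2 * (W.a₂ + x₁ + x₂) * h₂

end Chord

theorem exists_eval_addSubMap_sym2x (P Q : W.Point) :
    ∃ c : K, c ≠ 0 ∧ (fun i ↦ (addSubMap W i).eval (P.sym2x Q)) = c • (P + Q).sym2x (P - Q) := by
  match P, Q with
  | 0, 0 => simpa using exists_eval_addSubMap_sym2x_self (0 : W.Point)
  | 0, .some x y h =>
    refine ⟨1, one_ne_zero, ?_⟩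
    rw [zero_add, zero_sub, Point.sym2x_neg_right]
    simp [eval_addSubMap, sq, two_mul]
  | .some x y h, 0 =>
    exact ⟨1, one_ne_zero, by simp [eval_addSubMap, sq, two_mul]⟩
  | .some x₁ y₁ h₁, .some x₂ y₂ h₂ =>
    by_cases hx : x₁ = x₂
    · rcases Point.X_eq_iff (h₁ := h₁) (h₂ := h₂) |>.mp hx with h | h
      · rw [h]
        exact exists_eval_addSubMap_sym2x_self _
      · rw [h, Point.sym2x_neg_left, ← sub_eq_neg_add, ← neg_add', Point.sym2x_neg_right,
          Point.sym2x_comm (_ - _)]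
        exact exists_eval_addSubMap_sym2x_self _
    · refine ⟨_, pow_ne_zero 2 (sub_ne_zero.mpr hx), ?_⟩
      rw [sub_eq_add_neg (Point.some x₁ y₁ h₁), Point.neg_some, Point.add_of_X_ne hx,
        Point.add_of_X_ne hx, Point.sym2x_some_some, Point.sym2x_some_some, eval_addSubMap]
      simp only [Matrix.smul_cons, smul_eq_mul, Matrix.smul_empty, mul_one, one_pow]
      congrm ![?_, ?_, ?_]
      · exact (sub_sq_mul_addX_mul_addX h₁.1 h₂.1 hx).symm
      · exact (sub_sq_mul_addX_add_addX h₁.1 h₂.1 hx).symm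
      · ring

end AddSubMap

section NaiveHeight

variable {K : Type*} [Field K] {W : Affine K}

lemma finite_xRep_preimage {s : Set (Fin 2 → K)} (hs : s.Finite) :
    (Point.xRep ⁻¹' s : Set W.Point).Finite := by
  refine hs.preimage' fun r _ ↦ ?_
  rcases (Point.xRep ⁻¹' {r} : Set W.Point).eq_empty_or_nonempty with h | ⟨P, rfl⟩
  · exact h ▸ Set.finite_empty
  · exact (Set.toFinite {P, -P}).subset fun Q hQ ↦ Point.eq_or_eq_neg_of_xRep_eq_xRep hQ

variable [AdmissibleAbsValues K]

/-- The naïve (logarithmic) height of a point: the height of its image in `ℙ¹` under the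
`x`-coordinate map. -/
noncomputable def naiveHeight (P : W.Point) : ℝ := logHeight P.xRep

instance northcott_naiveHeight [Northcott (logHeight₁ (K := K))] :
    Northcott (naiveHeight : W.Point → ℝ) where
  finite_le B := by
    have hfin : (insert ![1, 0] ((fun x : K ↦ ![x, 1]) '' {x | logHeight₁ x ≤ B})).Finite :=
      ((Northcott.finite_le B).image _).insert _
    refine (finite_xRep_preimage hfin).subset ?_
    rintro (_ | ⟨x, y, h⟩) hP
    · simp [← Point.zero_def]
    · exact .inr ⟨x, by simpa [naiveHeight, logHeight₁_eq_logHeight] using hP, by simp⟩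

lemma exists_abs_logHeight_sym2x_sub_le (W : Affine K) :
    ∃ C, ∀ P Q : W.Point,
      |logHeight (P.sym2x Q) - (naiveHeight P + naiveHeight Q)| ≤ C := by
  obtain ⟨C, hC⟩ := abs_logHeight_sym2_sub_le K
  refine ⟨C, fun P Q ↦ ?_⟩
  have hxRep (P : W.Point) : ![P.xRep 0, P.xRep 1] = P.xRep := (List.ofFn_inj.mp rfl)
  have h := hC (hxRep P ▸ P.xRep_ne_zero) (hxRep Q ▸ Q.xRep_ne_zero)
  rwa [hxRep, hxRep] at h

variable [DecidableEq K]

theorem naiveHeight_parallelogram (W : Affine K) [W.IsElliptic] :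
    ∃ C, ∀ P Q : W.Point,
      |naiveHeight (P + Q) + naiveHeight (P - Q) - 2 * (naiveHeight P + naiveHeight Q)| ≤ C := by
  obtain ⟨C₁, h₁⟩ := exists_abs_logHeight_sym2x_sub_le W
  obtain ⟨C₂, h₂⟩ := abs_logHeight_addSubMap_sub_two_mul_logHeight_le W
  refine ⟨3 * C₁ + C₂, fun P Q ↦ ?_⟩
  obtain ⟨c, hc, hmap⟩ := exists_eval_addSubMap_sym2x P Q
  have hPQ := h₂ (P.sym2x Q)
  rw [hmap, logHeight_smul_eq_logHeight _ hc] at hPQ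
  grind [h₁ P Q, h₁ (P + Q) (P - Q)]

theorem fg_point_of_finiteIndex (W : Affine K) [W.IsElliptic]
    [Northcott (logHeight₁ (K := K))]
    (h : (nsmulAddMonoidHom (α := W.Point) 2).range.FiniteIndex) : AddGroup.FG W.Point :=
  have ⟨_, hC⟩ := naiveHeight_parallelogram W
  AddCommGroup.fg_of_descent' (h := naiveHeight) h (fun _ ↦ logHeight_nonneg _) hC

end NaiveHeight

/-! ### Selmer groups of Dedekind domains -/

section SelmerGroup

@[to_additive]
lemma finiteIndex_of_inv_mul_mem {G T : Type*} [Group G] [Finite T] (H : Subgroup G) {B : Set G}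
    (hB : B.Finite) (φ : G → T) (hφ : ∀ a ∉ B, ∀ b ∉ B, φ a = φ b → a⁻¹ * b ∈ H) :
    H.FiniteIndex := by
  have := hB.to_subtype
  classical
  let ψ (q : G ⧸ H) : B ⊕ T := if hq : q.out ∈ B then .inl ⟨q.out, hq⟩ else .inr (φ q.out)
  have hψ : ψ.Injective := by
    intro p q hpq
    suffices (p.out : G ⧸ H) = q.out by simpa using this
    by_cases hp : p.out ∈ B <;> by_cases hq : q.out ∈ B <;>
      simp only [ψ, hp, hq, ↓reduceDIte, reduceCtorEq, Sum.inl.injEq, Sum.inr.injEq,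
        Subtype.mk.injEq] at hpq
    · rw [hpq]
    · exact QuotientGroup.eq.mpr (hφ _ hp _ hq hpq)
  have := Finite.of_injective ψ hψ
  exact H.finiteIndex_of_finite_quotient

variable {R K : Type*} [CommRing R] [IsDedekindDomain R] [Field K] [Algebra R K]
  [IsFractionRing R K]

lemma finite_one_lt_valuation (a : K) : {v : HeightOneSpectrum R | 1 < v.valuation K a}.Finite :=
  HeightOneSpectrum.Support.finite R a

lemma finite_valuation_ne_one {a : K} (ha : a ≠ 0) :
    {v : HeightOneSpectrum R | v.valuation K a ≠ 1}.Finite := by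
  refine ((finite_one_lt_valuation a).union (finite_one_lt_valuation a⁻¹)).subset fun v hv ↦ ?_
  have hpos : 0 < v.valuation K a := (Valuation.pos_iff _).mpr ha
  simpa [one_lt_inv₀ hpos] using (lt_or_gt_of_ne hv).symm

lemma count_spanSingleton_unit (v : HeightOneSpectrum R) (a : Kˣ) :
    count K v (spanSingleton R⁰ (a : K)) = -(v.valuationOfNeZero a).toAdd := by
  classical
  obtain ⟨n, d, hnd⟩ := IsLocalization.exists_mk'_eq R⁰ (a : K)
  have hd : (d : R) ≠ 0 := nonZeroDivisors.coe_ne_zero d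
  have hn : n ≠ 0 := by
    rintro rfl
    exact a.ne_zero (by simpa using hnd.symm)
  have hspan : spanSingleton R⁰ (a : K) =
      spanSingleton R⁰ (algebraMap R K d)⁻¹ * ↑(Ideal.span {n}) := by
    rw [coeIdeal_span_singleton, spanSingleton_mul_spanSingleton, ← hnd,
      IsFractionRing.mk'_eq_div, div_eq_inv_mul]
  have hval : ((v.valuationOfNeZero a : Multiplicative ℤ) : WithZero (Multiplicative ℤ)) =
      WithZero.exp (-count K v (spanSingleton R⁰ (a : K))) := by
    rw [count_well_defined K v (by simp [spanSingleton_eq_zero_iff]) hspan, v.valuationOfNeZero_eq,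
      ← hnd, HeightOneSpectrum.valuation_of_mk', v.intValuation_if_neg hn,
      v.intValuation_if_neg hd, ← WithZero.exp_sub]
    congr 1
    ring
  rw [WithZero.coe_inj.mp hval, toAdd_ofAdd, neg_neg]

lemma mk_mem_selmerGroup_iff {S : Set (HeightOneSpectrum R)} {n : ℕ} {a : Kˣ} :
    (QuotientGroup.mk a ∈ selmerGroup (S := S) (n := n)) ↔
      ∀ v ∉ S, (n : ℤ) ∣ (v.valuationOfNeZero a).toAdd :=
  forall₂_congr fun _ _ ↦ ZMod.intCast_zmod_eq_zero_iff_dvd _ n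

lemma exists_toPrincipalIdeal_eq_pow {n : ℕ} {a : Kˣ} (hn : n ≠ 0)
    (ha : ∀ v : HeightOneSpectrum R, (n : ℤ) ∣ (v.valuationOfNeZero a).toAdd) :
    ∃ J : (FractionalIdeal R⁰ K)ˣ, toPrincipalIdeal R K a = J ^ n := by
  have hI : spanSingleton R⁰ (a : K) ≠ 0 := by simp [spanSingleton_eq_zero_iff]
  have hcount (v) : (n : ℤ) ∣ count K v (spanSingleton R⁰ (a : K)) := by
    rw [count_spanSingleton_unit, dvd_neg]
    exact ha v
  choose c hc using hcount
  have hfin : Function.HasFiniteMulSupport fun v : HeightOneSpectrum R ↦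
      (v.asIdeal : FractionalIdeal R⁰ K) ^ c v := by
    refine (finite_factors (spanSingleton R⁰ (a : K))).subset fun v hv h ↦ hv ?_
    have : c v = 0 := by simpa [hc v, hn] using h
    simp [this]
  have hfact : (∏ᶠ v : HeightOneSpectrum R, (v.asIdeal : FractionalIdeal R⁰ K) ^ c v) ^ n =
      spanSingleton R⁰ (a : K) := by
    rw [finprod_pow hfin, ← finprod_heightOneSpectrum_factorization' K hI]
    simp_rw [hc, mul_comm (n : ℤ), zpow_mul, zpow_natCast]
  refine ⟨Units.mk0 _ (pow_ne_zero_iff hn |>.mp (hfact ▸ hI)), Units.ext ?_⟩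
  simp [hfact]

lemma exists_eq_mul_pow_of_mk_eq {n : ℕ} {a b : Kˣ} {I J : (FractionalIdeal R⁰ K)ˣ}
    (ha : toPrincipalIdeal R K a = I ^ n) (hb : toPrincipalIdeal R K b = J ^ n)
    (hIJ : ClassGroup.mk K I = ClassGroup.mk K J) :
    ∃ (u : Rˣ) (c : Kˣ), a⁻¹ * b = Units.map (algebraMap R K).toMonoidHom u * c ^ n := by
  have hmk : ClassGroup.mk K (I⁻¹ * J) = 1 := by rw [map_mul, map_inv, hIJ, inv_mul_cancel]
  rw [← (ClassGroup.equiv K).injective.eq_iff, map_one, ClassGroup.equiv_mk,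
    QuotientGroup.mk'_apply, QuotientGroup.eq_one_iff] at hmk
  obtain ⟨c, hc⟩ := hmk
  have hprin : toPrincipalIdeal R K (c ^ n) = toPrincipalIdeal R K (a⁻¹ * b) := by
    rw [map_pow, map_mul, map_inv, ha, hb, ← inv_pow, ← mul_pow, hc]
    congr 1
    ext1
    simp
  have hspan := congrArg Units.val hprin
  rw [coe_toPrincipalIdeal, coe_toPrincipalIdeal, spanSingleton_eq_spanSingleton] at hspan
  obtain ⟨u, hu⟩ := hspan
  refine ⟨u, c, Units.ext ?_⟩
  rw [Units.val_mul (_ : Kˣ) (_ ^ n), ← hu]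
  simp [Units.smul_def, Algebra.smul_def]

lemma finite_range_fromUnit [Group.FG Rˣ] (n : ℕ) [NeZero n] :
    Finite (selmerGroup.fromUnit (R := R) (K := K) (n := n)).range := by
  have : Fact (0 < n) := ⟨NeZero.pos n⟩
  have : (powMonoidHom n : Rˣ →* Rˣ).range.FiniteIndex :=
    Subgroup.finiteIndex_range_powMonoidHom_of_fg _ (NeZero.ne n)
  rw [← (QuotientGroup.quotientKerEquivRange _).finite_iff, selmerGroup.fromUnit_ker]
  exact Subgroup.finite_quotient_of_finiteIndex

lemma finiteIndex_range_fromUnit [Finite (ClassGroup R)] (n : ℕ) [NeZero n] :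
    (selmerGroup.fromUnit (R := R) (K := K) (n := n)).range.FiniteIndex := by
  have hlift (x : selmerGroup (S := (∅ : Set (HeightOneSpectrum R))) (K := K) (n := n)) :
      ∃ (a : Kˣ) (J : (FractionalIdeal R⁰ K)ˣ),
        QuotientGroup.mk a = x.1 ∧ toPrincipalIdeal R K a = J ^ n := by
    obtain ⟨⟨a⟩, ha⟩ := x
    obtain ⟨J, hJ⟩ := exists_toPrincipalIdeal_eq_pow (NeZero.ne n) fun v ↦
      mk_mem_selmerGroup_iff.mp ha v (Set.notMem_empty v)
    exact ⟨a, J, rfl, hJ⟩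
  choose a J ha hJ using hlift
  refine finiteIndex_of_inv_mul_mem _ Set.finite_empty (fun x ↦ ClassGroup.mk K (J x))
    fun x _ y _ hxy ↦ ?_
  obtain ⟨u, c, huc⟩ := exists_eq_mul_pow_of_mk_eq (hJ x) (hJ y) hxy
  refine ⟨u, Subtype.ext ?_⟩
  calc (QuotientGroup.mk (Units.map (algebraMap R K).toMonoidHom u) :
        Kˣ ⧸ (powMonoidHom n : Kˣ →* Kˣ).range)
    _ = QuotientGroup.mk ((a x)⁻¹ * a y) :=
      QuotientGroup.eq.mpr ⟨c, by rw [huc, inv_mul_cancel_left, powMonoidHom_apply]⟩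
    _ = (x⁻¹ * y).1 := by
      rw [QuotientGroup.mk_mul, QuotientGroup.mk_inv, ha, ha]
      rfl

theorem finite_selmerGroup [Finite (ClassGroup R)] [Group.FG Rˣ]
    {S : Set (HeightOneSpectrum R)} (hS : S.Finite) (n : ℕ) [NeZero n] :
    Finite (selmerGroup (S := S) (K := K) (n := n)) := by
  have := hS.to_subtype
  have hempty : Finite (selmerGroup (S := (∅ : Set (HeightOneSpectrum R))) (K := K) (n := n)) :=
    (Subgroup.finite_iff_finite_and_finiteIndex _).mpr
      ⟨finite_range_fromUnit n, finiteIndex_range_fromUnit n⟩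
  rw [MonoidHom.finite_iff_finite_ker_range selmerGroup.valuation, selmerGroup.valuation_ker_eq]
  exact ⟨(Subgroup.subgroupOfEquivOfLe (selmerGroup.monotone S.empty_subset)).finite_iff.mpr hempty,
    inferInstance⟩

end SelmerGroup

/-! ### Two-descent -/

section TwoDescent

open Polynomial in
/-- `e` enumerates, with multiplicity, the roots of the `2`-torsion polynomial
`4x³ + b₂x² + 2b₄x + b₆`. For an elliptic curve over a field in which `2 ≠ 0`, such an `e` exists
if and only if all `2`-torsion is rational, the points of order two being those with `x`-coordinate
`e i`. -/
def IsTwoTorsionRoots {R : Type*} [CommRing R] (W : WeierstrassCurve R) (e : Fin 3 → R) : Prop :=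
  W.twoTorsionPolynomial.toPoly = C 4 * ∏ i, (X - C (e i))

namespace IsTwoTorsionRoots

section CommRing

variable {R : Type*} [CommRing R] {W : WeierstrassCurve R} {e : Fin 3 → R}

lemma twoTorsionPolynomial_eq (he : IsTwoTorsionRoots W e) :
    W.twoTorsionPolynomial = ⟨4, 4 * -(e 0 + e 1 + e 2),
      4 * (e 0 * e 1 + e 0 * e 2 + e 1 * e 2), 4 * -(e 0 * e 1 * e 2)⟩ := by
  rw [← Cubic.toPoly_injective, he, ← Cubic.C_mul_prod_X_sub_C_eq, Fin.prod_univ_three]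
  ring

lemma b₂_eq (he : IsTwoTorsionRoots W e) : W.b₂ = -4 * (e 0 + e 1 + e 2) :=
  (congrArg Cubic.b he.twoTorsionPolynomial_eq).trans (by ring)

lemma two_mul_b₄_eq (he : IsTwoTorsionRoots W e) :
    2 * W.b₄ = 4 * (e 0 * e 1 + e 0 * e 2 + e 1 * e 2) :=
  congrArg Cubic.c he.twoTorsionPolynomial_eq

lemma discr_eq (he : IsTwoTorsionRoots W e) :
    W.twoTorsionPolynomial.discr = (16 * (e 0 - e 1) * (e 0 - e 2) * (e 1 - e 2)) ^ 2 := by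
  rw [he.twoTorsionPolynomial_eq, Cubic.discr]
  ring

lemma eval_eq (he : IsTwoTorsionRoots W e) (x : R) :
    4 * x ^ 3 + W.b₂ * x ^ 2 + 2 * W.b₄ * x + W.b₆ = 4 * ∏ i, (x - e i) := by
  simpa [twoTorsionPolynomial, Cubic.toPoly, Polynomial.eval_prod] using
    congrArg (Polynomial.eval x) he

lemma derivative_eq (he : IsTwoTorsionRoots W e) (x : R) :
    12 * x ^ 2 + 2 * W.b₂ * x + 2 * W.b₄ =
      4 * ((x - e 0) * (x - e 1) + (x - e 0) * (x - e 2) + (x - e 1) * (x - e 2)) := by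
  linear_combination 2 * x * he.b₂_eq + he.two_mul_b₄_eq

lemma eval_root (he : IsTwoTorsionRoots W e) (i : Fin 3) :
    4 * e i ^ 3 + W.b₂ * e i ^ 2 + 2 * W.b₄ * e i + W.b₆ = 0 := by
  rw [he.eval_eq, Finset.prod_eq_zero (Finset.mem_univ i) (sub_self _), mul_zero]

end CommRing

variable {K : Type*} [Field K] [NeZero (2 : K)] {W : Affine K} {e : Fin 3 → K}

lemma injective [W.IsElliptic] (he : IsTwoTorsionRoots W e) : e.Injective := by
  have h := W.twoTorsionPolynomial_discr_ne_zero_of_isElliptic (isUnit_iff_ne_zero.mpr two_ne_zero)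
  rw [he.discr_eq] at h
  intro i j hij
  by_contra hne
  apply h
  fin_cases i <;> fin_cases j <;> simp_all

lemma equation_iff (he : IsTwoTorsionRoots W e) (x y : K) :
    W.Equation x y ↔ (2 * y + W.a₁ * x + W.a₃) ^ 2 = 4 * ∏ i, (x - e i) := by
  have two_ne : (2 : K) ≠ 0 := two_ne_zero
  have h := he.eval_eq x
  rw [b₂, b₄, b₆] at h
  rw [Affine.equation_iff, ← mul_right_inj' (mul_ne_zero two_ne two_ne)]
  constructor <;> intro hxy
  · linear_combination hxy + h
  · linear_combination hxy - h

lemma isSquare_prod (he : IsTwoTorsionRoots W e) {x y : K} (h : W.Equation x y) :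
    IsSquare (∏ i, (x - e i)) := by
  have two_ne : (2 : K) ≠ 0 := two_ne_zero
  refine ⟨(2 * y + W.a₁ * x + W.a₃) / 2, ?_⟩
  field_simp
  linear_combination -(he.equation_iff x y).mp h

variable [DecidableEq K]

lemma isSquare_mul_mul_addX_sub (he : IsTwoTorsionRoots W e) {x₁ y₁ x₂ y₂ : K}
    (h₁ : W.Equation x₁ y₁) (h₂ : W.Equation x₂ y₂) (hxy : ¬(x₁ = x₂ ∧ y₁ = W.negY x₂ y₂))
    (i : Fin 3) :
    IsSquare ((x₁ - e i) * (x₂ - e i) * (W.addX x₁ x₂ (W.slope x₁ x₂ y₁ y₂) - e i)) := by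
  have hroot := he.eval_root i
  have hline := congrArg (Polynomial.eval (e i)) (addPolynomial_slope h₁ h₂ hxy)
  rw [addPolynomial_eq] at hline
  generalize W.slope x₁ x₂ y₁ y₂ = l at *
  generalize W.addX x₁ x₂ l = x₃ at *
  simp only [Cubic.toPoly, map_one, one_mul, Polynomial.eval_neg, Polynomial.eval_add,
    Polynomial.eval_mul, Polynomial.eval_sub, Polynomial.eval_pow, Polynomial.eval_X,
    Polynomial.eval_C] at hline
  rw [b₂, b₄, b₆] at hroot
  have h2 : (2 : K) ≠ 0 := two_ne_zero
  refine ⟨(2 * (l * (e i - x₁) + y₁) + W.a₁ * e i + W.a₃) / 2, ?_⟩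
  field_simp
  linear_combination -4 * hline - hroot

lemma slope_self_eq (he : IsTwoTorsionRoots W e) {x y : K} {r : Fin 3 → K}
    (h₀ : x - e 0 = (r 0 + r 1) * (r 0 + r 2)) (h₁ : x - e 1 = (r 0 + r 1) * (r 1 + r 2))
    (h₂ : x - e 2 = (r 0 + r 2) * (r 1 + r 2))
    (hy : 2 * y + W.a₁ * x + W.a₃ = 2 * ((r 0 + r 1) * (r 0 + r 2) * (r 1 + r 2)))
    (hne : y ≠ W.negY x y) :
    W.slope x x y y = r 0 + r 1 + r 2 - W.a₁ / 2 := by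
  have two_ne : (2 : K) ≠ 0 := two_ne_zero
  have hnum := he.derivative_eq x
  have hden : y - W.negY x y = 2 * y + W.a₁ * x + W.a₃ := by rw [negY]; ring
  rw [h₀, h₁, h₂, b₂, b₄] at hnum
  rw [slope_of_Y_ne rfl hne, div_eq_iff (sub_ne_zero.mpr hne), hden, hy]
  field_simp
  apply mul_left_cancel₀ (mul_ne_zero two_ne two_ne)
  linear_combination hnum - 2 * W.a₁ * hy

/-- The half of `(x, y)` is found by solving `X - e i = (r i + r j) * (r i + r k)`, whose product
over `i` is visibly a square. -/
lemma exists_add_self_eq_of_sq [W.IsElliptic] (he : IsTwoTorsionRoots W e) {x y : K}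
    (h : W.Nonsingular x y) {r : Fin 3 → K} (hr : ∀ i, x - e i = r i ^ 2)
    (hy : 2 * y + W.a₁ * x + W.a₃ = 2 * (r 0 * r 1 * r 2)) :
    ∃ S : W.Point, S + S = .some x y h := by
  have two_ne : (2 : K) ≠ 0 := two_ne_zero
  have hr_ne {i j} (hij : i ≠ j) : r i + r j ≠ 0 := fun h ↦
    hij (he.injective (by linear_combination hr j - hr i + (r j - r i) * h))
  set X := x + r 0 * r 1 + r 0 * r 2 + r 1 * r 2
  set D := (r 0 + r 1) * (r 0 + r 2) * (r 1 + r 2) with hD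
  set Y := D - (W.a₁ * X + W.a₃) / 2 with hY
  have h₀ : X - e 0 = (r 0 + r 1) * (r 0 + r 2) := by linear_combination hr 0
  have h₁ : X - e 1 = (r 0 + r 1) * (r 1 + r 2) := by linear_combination hr 1
  have h₂ : X - e 2 = (r 0 + r 2) * (r 1 + r 2) := by linear_combination hr 2
  have hYD : 2 * Y + W.a₁ * X + W.a₃ = 2 * D := by rw [hY]; field_simp; ring
  have hXY : W.Equation X Y := by
    rw [he.equation_iff, Fin.prod_univ_three, h₀, h₁, h₂, hYD, hD]
    ring
  have hD0 : D ≠ 0 := by simp [hD, hr_ne]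
  have hne : Y ≠ W.negY X Y := by
    rw [negY]
    intro h
    exact mul_ne_zero two_ne hD0 (by linear_combination h - hYD)
  have hslope := he.slope_self_eq h₀ h₁ h₂ hYD hne
  have haddX : W.addX X X (W.slope X X Y Y) = x := by
    have h := he.b₂_eq
    rw [b₂] at h
    rw [hslope, addX]
    field_simp
    linear_combination -h - 4 * hr 0 - 4 * hr 1 - 4 * hr 2
  have haddY : W.addY X X Y (W.slope X X Y Y) = y := by
    rw [addY, negAddY, haddX, hslope, negY]
    apply mul_left_cancel₀ two_ne
    field_simp
    linear_combination -hy - hYD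
  refine ⟨.some X Y (equation_iff_nonsingular.mp hXY), ?_⟩
  rw [Point.add_self_of_Y_ne hne]
  simp only [haddX, haddY]

theorem exists_add_self_eq [W.IsElliptic] (he : IsTwoTorsionRoots W e) {x y : K}
    (h : W.Nonsingular x y) (hsq : ∀ i, IsSquare (x - e i)) :
    ∃ S : W.Point, S + S = .some x y h := by
  choose r hr using fun i ↦ isSquare_iff_exists_sq .. |>.mp (hsq i)
  have hy : (2 * y + W.a₁ * x + W.a₃) ^ 2 = (2 * (r 0 * r 1 * r 2)) ^ 2 := by
    rw [(he.equation_iff x y).mp h.1, Fin.prod_univ_three, hr, hr, hr]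
    ring
  rcases sq_eq_sq_iff_eq_or_eq_neg.mp hy with hy | hy
  · exact he.exists_add_self_eq_of_sq h hr hy
  · refine he.exists_add_self_eq_of_sq h (r := -r) (fun i ↦ by simp [hr]) ?_
    simp only [hy, Pi.neg_apply]
    ring

lemma exists_add_self_eq_add [W.IsElliptic] (he : IsTwoTorsionRoots W e) {x₁ y₁ x₂ y₂ : K}
    (h₁ : W.Nonsingular x₁ y₁) (h₂ : W.Nonsingular x₂ y₂) (hx₁ : ∀ i, x₁ ≠ e i)
    (hx₂ : ∀ i, x₂ ≠ e i) (hsq : ∀ i, IsSquare ((x₁ - e i) * (x₂ - e i))) :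
    ∃ S : W.Point, S + S = .some x₁ y₁ h₁ + .some x₂ y₂ h₂ := by
  by_cases hxy : x₁ = x₂ ∧ y₁ = W.negY x₂ y₂
  · exact ⟨0, by rw [Point.add_of_Y_eq hxy.1 hxy.2, add_zero]⟩
  · rw [Point.add_some hxy]
    refine he.exists_add_self_eq _ fun i ↦ ?_
    have hne : (x₁ - e i) * (x₂ - e i) ≠ 0 :=
      mul_ne_zero (sub_ne_zero.mpr (hx₁ i)) (sub_ne_zero.mpr (hx₂ i))
    simpa [hne] using (he.isSquare_mul_mul_addX_sub h₁.1 h₂.1 hxy i).div (hsq i)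

end IsTwoTorsionRoots

section SquareClass

variable {K : Type*} [Field K]

open Classical in
/-- The class of `a` in `Kˣ / Kˣ²`, with the convention that `0` has trivial class. -/
noncomputable def squareClass (a : K) : Kˣ ⧸ (powMonoidHom 2 : Kˣ →* Kˣ).range :=
  if h : a = 0 then 1 else QuotientGroup.mk (Units.mk0 a h)

lemma squareClass_of_ne_zero {a : K} (ha : a ≠ 0) :
    squareClass a = QuotientGroup.mk (Units.mk0 a ha) :=
  dif_neg ha

lemma isSquare_mul_of_squareClass_eq {a b : K} (ha : a ≠ 0) (hb : b ≠ 0)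
    (h : squareClass a = squareClass b) : IsSquare (a * b) := by
  rw [squareClass_of_ne_zero ha, squareClass_of_ne_zero hb] at h
  obtain ⟨c, hc⟩ := QuotientGroup.eq.mp h
  refine ⟨a * c, ?_⟩
  have hc : (c : K) ^ 2 = a⁻¹ * b := by simpa using congrArg Units.val hc
  field_simp at hc
  linear_combination -a * hc

variable {R : Type*} [CommRing R] [IsDedekindDomain R] [Algebra R K] [IsFractionRing R K]

lemma squareClass_mem_selmerGroup {S : Set (HeightOneSpectrum R)} {a : K}
    (h : ∀ v ∉ S, IsSquare (v.valuation K a)) :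
    squareClass a ∈ selmerGroup (S := S) (n := 2) := by
  by_cases ha : a = 0
  · simp [squareClass, ha, one_mem]
  rw [squareClass_of_ne_zero ha, mk_mem_selmerGroup_iff]
  intro v hv
  obtain ⟨s, hs⟩ := h v hv
  have hs₀ : s ≠ 0 := by
    rintro rfl
    simp [ha] at hs
  have hval : v.valuationOfNeZero (Units.mk0 a ha) =
      WithZero.unzero hs₀ * WithZero.unzero hs₀ := by
    rw [← WithZero.coe_inj, v.valuationOfNeZero_eq, WithZero.coe_mul, WithZero.coe_unzero,
      Units.val_mk0, hs]
  exact ⟨(WithZero.unzero hs₀).toAdd, by rw [hval, toAdd_mul, Nat.cast_two, two_mul]⟩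

end SquareClass

lemma isSquare_valuation_sub {ι K Γ : Type*} [Fintype ι] [Field K]
    [LinearOrderedCommGroupWithZero Γ] (v : Valuation K Γ) {e : ι → K} {x : K} {i : ι}
    (hι : Odd (Fintype.card ι)) (he : ∀ j, v (e j) ≤ 1) (hsub : ∀ j ≠ i, v (e i - e j) = 1)
    (hsq : IsSquare (∏ j, (x - e j))) : IsSquare (v (x - e i)) := by
  have hv : IsSquare (∏ j, v (x - e j)) := by simpa using hsq.map v
  rcases lt_or_ge 1 (v x) with hx | hx
  · have hval (j) : v (x - e j) = v x := v.map_sub_eq_of_lt_left ((he j).trans_lt hx)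
    have hx₀ : v x ≠ 0 := (zero_lt_one.trans hx).ne'
    obtain ⟨m, hm⟩ := hι
    simp only [hval, Finset.prod_const, Finset.card_univ, hm] at hv ⊢
    simpa [pow_succ, hx₀] using hv.div ((even_two_mul m).isSquare_pow (v x))
  · rcases (v.map_sub_le hx (he i)).lt_or_eq with h | h
    · have hval (j) (hj : j ≠ i) : v (x - e j) = 1 := by
        rw [← sub_add_sub_cancel x (e i) (e j), v.map_add_eq_of_lt_right (by rwa [hsub j hj]),
          hsub j hj]
      rwa [Fintype.prod_eq_single i hval] at hv
    · exact h ▸ IsSquare.one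

section DescentMap

variable {K : Type*} [Field K] {W : Affine K} {e : Fin 3 → K}

/-- The `2`-descent map `E(K) → (Kˣ / Kˣ²)³`, sending `(x, y)` to the classes of the `x - e i`.
Its values at the point at infinity and at the points with `x = e i` are not those making it a
homomorphism, but there are only finitely many such points. -/
noncomputable def descentMap (e : Fin 3 → K) (P : W.Point) (i : Fin 3) :
    Kˣ ⧸ (powMonoidHom 2 : Kˣ →* Kˣ).range :=
  squareClass (P.xRep 0 - e i * P.xRep 1)

lemma descentMap_some {x y : K} (h : W.Nonsingular x y) (i : Fin 3) :
    descentMap e (.some x y h) i = squareClass (x - e i) := by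
  simp [descentMap]

variable [NeZero (2 : K)]

lemma descentMap_mem_selmerGroup {R : Type*} [CommRing R] [IsDedekindDomain R] [Algebra R K]
    [IsFractionRing R K] {S : Set (HeightOneSpectrum R)} (he : IsTwoTorsionRoots W e)
    (hint : ∀ v ∉ S, ∀ i, v.valuation K (e i) ≤ 1)
    (hsub : ∀ v ∉ S, ∀ i, ∀ j ≠ i, v.valuation K (e i - e j) = 1) (P : W.Point) (i : Fin 3) :
    descentMap e P i ∈ selmerGroup (S := S) (n := 2) := by
  refine squareClass_mem_selmerGroup fun v hv ↦ ?_
  rcases P with _ | ⟨x, y, h⟩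
  · simp [← Point.zero_def]
  · simpa using isSquare_valuation_sub _ (by decide) (hint v hv) (hsub v hv i)
      (he.isSquare_prod h.1)

variable [DecidableEq K] [W.IsElliptic]

/-- It is `P + Q = (-P + Q) + 2P` that gets halved, so that the sign of `P` does not intervene. -/
lemma neg_add_mem_range_of_descentMap_eq (he : IsTwoTorsionRoots W e) {P Q : W.Point}
    (hP : P.xRep ∉ insert ![1, 0] (Set.range fun i ↦ ![e i, 1]))
    (hQ : Q.xRep ∉ insert ![1, 0] (Set.range fun i ↦ ![e i, 1]))
    (h : descentMap e P = descentMap e Q) :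
    -P + Q ∈ (nsmulAddMonoidHom (α := W.Point) 2).range := by
  rcases P with _ | ⟨x₁, y₁, h₁⟩
  · simp [← Point.zero_def] at hP
  rcases Q with _ | ⟨x₂, y₂, h₂⟩
  · simp [← Point.zero_def] at hQ
  have hx₁ (i) : x₁ ≠ e i := by
    rintro rfl
    simp at hP
  have hx₂ (i) : x₂ ≠ e i := by
    rintro rfl
    simp at hQ
  obtain ⟨S, hS⟩ := he.exists_add_self_eq_add h₁ h₂ hx₁ hx₂ fun i ↦
    isSquare_mul_of_squareClass_eq (sub_ne_zero.mpr (hx₁ i)) (sub_ne_zero.mpr (hx₂ i))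
      (by simpa [descentMap_some] using congrFun h i)
  refine ⟨S - .some x₁ y₁ h₁, ?_⟩
  rw [nsmulAddMonoidHom_apply, nsmul_sub, two_nsmul, two_nsmul, hS]
  abel

theorem finiteIndex_range_two_nsmul (R : Type*) [CommRing R] [IsDedekindDomain R] [Algebra R K]
    [IsFractionRing R K] [Finite (ClassGroup R)] [Group.FG Rˣ] (he : IsTwoTorsionRoots W e) :
    (nsmulAddMonoidHom (α := W.Point) 2).range.FiniteIndex := by
  let S : Set (HeightOneSpectrum R) := (⋃ i, {v | 1 < v.valuation K (e i)}) ∪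
    ⋃ i, ⋃ j, ⋃ _ : j ≠ i, {v | v.valuation K (e i - e j) ≠ 1}
  have hS : S.Finite :=
    (Set.finite_iUnion fun i ↦ finite_one_lt_valuation _).union <|
      Set.finite_iUnion fun i ↦ Set.finite_iUnion fun j ↦ Set.finite_iUnion fun hij ↦
        finite_valuation_ne_one (sub_ne_zero.mpr (he.injective.ne hij.symm))
  have hint : ∀ v ∉ S, ∀ i, v.valuation K (e i) ≤ 1 := by
    simp_all [S]
  have hsub : ∀ v ∉ S, ∀ i, ∀ j ≠ i, v.valuation K (e i - e j) = 1 := by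
    simp_all [S]
  have := finite_selmerGroup (K := K) hS 2
  have hB := finite_xRep_preimage (W := W)
    ((Set.finite_range fun i ↦ ![e i, 1]).insert ![1, 0])
  let φ (P : W.Point) (i : Fin 3) : selmerGroup (S := S) (K := K) (n := 2) :=
    ⟨descentMap e P i, descentMap_mem_selmerGroup he hint hsub P i⟩
  exact finiteIndex_of_neg_add_mem _ hB φ fun P hP Q hQ h ↦
    neg_add_mem_range_of_descentMap_eq he hP hQ <|
      funext fun i ↦ congrArg Subtype.val (congrFun h i)

end DescentMap
end TwoDescent

/-! ### Number fields -/

theorem fg_point_of_isTwoTorsionRoots {K : Type*} [Field K] [NumberField K] [DecidableEq K]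
    {W : Affine K} [W.IsElliptic] {e : Fin 3 → K} (he : IsTwoTorsionRoots W e) :
    AddGroup.FG W.Point := by
  have : Group.FG (NumberField.RingOfIntegers K)ˣ := Group.fg_iff_monoid_fg.mpr inferInstance
  exact fg_point_of_finiteIndex W (finiteIndex_range_two_nsmul (NumberField.RingOfIntegers K) he)

lemma addGroup_fg_of_injective {A B : Type*} [AddCommGroup A] [AddCommGroup B]
    (hB : AddGroup.FG B) {f : A →+ B} (hf : Function.Injective f) : AddGroup.FG A := by
  have : Module.Finite ℤ B := Module.Finite.iff_addGroup_fg.mpr hB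
  exact Module.Finite.iff_addGroup_fg.mp (Module.Finite.of_injective f.toIntLinearMap hf)

lemma exists_isTwoTorsionRoots_map {K L : Type*} [Field K] [Field L] [NeZero (2 : K)]
    {f : K →+* L} {W : WeierstrassCurve K} (h : (W.twoTorsionPolynomial.toPoly.map f).Splits) :
    ∃ e, IsTwoTorsionRoots (W.map f) e := by
  have two_ne : (2 : K) ≠ 0 := two_ne_zero
  have ha : W.twoTorsionPolynomial.a ≠ 0 := by
    simpa [twoTorsionPolynomial, show (4 : K) = 2 * 2 by norm_num]
  obtain ⟨x, y, z, hxyz⟩ := (Cubic.splits_iff_roots_eq_three ha).mp h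
  refine ⟨![x, y, z], ?_⟩
  have hmap : (W.map f).twoTorsionPolynomial = W.twoTorsionPolynomial.map f := by
    simp [twoTorsionPolynomial, Cubic.map, _root_.map_ofNat f]
  rw [IsTwoTorsionRoots, hmap, Cubic.eq_prod_three_roots ha hxyz]
  simp [twoTorsionPolynomial, Fin.prod_univ_three, mul_assoc, _root_.map_ofNat f]

end MordellWeil

open WeierstrassCurve MordellWeil in
theorem mordell_theorem_general {K : Type*} [Field K] [NumberField K] [DecidableEq K]
    (E : WeierstrassCurve K) [E.IsElliptic] : AddGroup.FG E.toAffine.Point := by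
  classical
  let L := E.twoTorsionPolynomial.toPoly.SplittingField
  have : NumberField L := NumberField.of_module_finite K L
  obtain ⟨e, he⟩ := exists_isTwoTorsionRoots_map
    (Polynomial.SplittingField.splits E.twoTorsionPolynomial.toPoly)
  have hL : AddGroup.FG (E.map (algebraMap K L)).toAffine.Point := fg_point_of_isTwoTorsionRoots he
  have hK : E.baseChange K = E := by ext <;> simp [WeierstrassCurve.baseChange]
  have hfg : AddGroup.FG (E.baseChange K).toAffine.Point :=
    addGroup_fg_of_injective hL (Affine.Point.map_injective (W' := E) (Algebra.ofId K L))
  rwa [hK] at hfg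

/-- Mordell's theorem: for every elliptic curve `E` over `ℚ`, the abelian group `E(ℚ)` of
rational points is finitely generated. -/
theorem mordell_theorem (E : WeierstrassCurve ℚ) [E.IsElliptic] :
    AddGroup.FG E.toAffine.Point :=
  mordell_theorem_general E
end

section
/- Siegel's theorem on integral points on hyperelliptic curves (Mordell's problem 2): let f be a polynomial with integer coefficients that is squarefree and of degree at least 3. Then the set of pairs of integers (x, y) with y² = f(x) is finite. -/
/-!
Over a number field, scaling the variable turns `y² = f(x)` into the statement that
`c * ∏ β, (x - β)` is a square, with integral `c` and `β`. A prime dividing `x - β` to an odd power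
divides `c` or a difference of two roots, so by finiteness of the class group and finite generation
of the units only finitely many square classes of `x - β` occur, and after a fixed finite extension
every `x - βᵢ` is a square `ηᵢ²`. Then `(ηᵢ - ηⱼ) * (ηᵢ + ηⱼ) = βⱼ - βᵢ`, so
`(η₁ - η₂) + (η₂ - η₃) = η₁ - η₃` and `(η₁ + η₂) - (η₂ + η₃) = η₁ - η₃` are relations between
divisors of a fixed integer. Modulo cubes of units there are only finitely many such divisors, and
each relation becomes one of finitely many Thue equations `a * u³ - b * v³ = c`.

A Thue equation `a * uⁿ - b * vⁿ = c` with `n ≥ 3` is treated by a gap principle. At every complex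
embedding a solution is close to an `n`-th root of `b / a`. Evaluating the diagonal Padé
approximants of the `n`-th root at one solution `p` and comparing with another solution `q` that is
close to the same roots gives an algebraic integer, the Padé gap, whose conjugates are all small;
two consecutive degrees cannot both give zero. Its norm would be less than `1` for a suitable
degree, provided that `p` is large, that the height of `q` is much larger still, and that both
heights are distributed over the embeddings in nearly the same proportions. There are finitely many
choices of nearest roots and of approximate proportions, so the heights are bounded.
-/

section ArithmeticProgressions

open Finset

theorem factorial_dvd_pow_mul_prod_arith (d a l : ℕ) :
    l.factorial ∣ d ^ l * ∏ m ∈ range l, (d * m + a) := by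
  refine (Nat.dvd_iff_prime_pow_dvd_dvd _ _).2 fun p k hp hk => ?_
  by_cases hpd : p ∣ d
  · have hkl : k ≤ l := by
      have : Fact p.Prime := ⟨hp⟩
      have hv := (padicValNat_dvd_iff_le (p := p) l.factorial_ne_zero).1 hk
      have hlegendre := sub_one_mul_padicValNat_factorial (p := p) l
      have := Nat.le_mul_of_pos_left (padicValNat p l.factorial) (Nat.sub_pos_of_lt hp.one_lt)
      omega
    exact ((pow_dvd_pow p hkl).trans (pow_dvd_pow_of_dvd hpd l)).mul_right _
  · have hcop : d.Coprime (p ^ k) :=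
      (((Nat.Prime.coprime_iff_not_dvd hp).2 hpd).symm).pow_right k
    have : NeZero (p ^ k) := ⟨pow_ne_zero k hp.ne_zero⟩
    obtain ⟨u, hu⟩ : ∃ u : ℕ, (d : ZMod (p ^ k)) * u = 1 :=
      ⟨((d : ZMod (p ^ k))⁻¹).val, by
        rw [ZMod.natCast_zmod_val, ZMod.coe_mul_inv_eq_one d hcop]⟩
    -- Modulo `p ^ k` the progression is `d` times a string of consecutive integers.
    have hasc : p ^ k ∣ ∏ m ∈ range l, d * (u * a + m) := by
      rw [← pow_card_mul_prod, ← Nat.ascFactorial_eq_prod_range]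
      exact (hk.trans (Nat.factorial_dvd_ascFactorial _ _)).mul_left _
    refine Dvd.dvd.mul_left ?_ _
    rw [← ZMod.natCast_eq_zero_iff] at hasc ⊢
    rw [← hasc]
    push_cast
    exact prod_congr rfl fun m _ => by linear_combination -(a : ZMod (p ^ k)) * hu

/-- The product `c (c + n) (c + 2 n) ⋯ (c + (l - 1) n)`. -/
def arithProd (n c l : ℕ) : ℕ := ∏ m ∈ range l, (n * m + c)

theorem arithProd_pos {c : ℕ} (n : ℕ) (hc : 0 < c) (l : ℕ) : 0 < arithProd n c l :=
  prod_pos fun _ _ => by positivity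

theorem arithProd_add (n c r l : ℕ) :
    arithProd n c (r + l) = arithProd n c r * ∏ m ∈ range l, (n * (r + m) + c) :=
  prod_range_add _ _ _

/-- The generalized binomial coefficient `binom (r + c / n + l - 1, l)`, scaled by `n ^ (2 * l)`
so as to be an integer. -/
def scaledMultichoose (n c r l : ℕ) : ℕ :=
  n ^ l * (∏ m ∈ range l, (n * (r + m) + c)) / l.factorial

theorem scaledMultichoose_mul_factorial (n c r l : ℕ) :
    scaledMultichoose n c r l * l.factorial = n ^ l * ∏ m ∈ range l, (n * (r + m) + c) := by
  refine Nat.div_mul_cancel ?_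
  simpa only [mul_add, add_assoc, add_left_comm, add_comm] using
    factorial_dvd_pow_mul_prod_arith n (n * r + c) l

theorem scaledMultichoose_mul_factorial_mul_arithProd (n c r l : ℕ) :
    scaledMultichoose n c r l * l.factorial * arithProd n c r = n ^ l * arithProd n c (r + l) := by
  rw [scaledMultichoose_mul_factorial, arithProd_add]
  ring

theorem prod_range_int_sub {M : Type*} [CommMonoid M] (f : ℤ → M) (i l : ℕ) :
    ∏ j ∈ range (i + l + 1), f (i - j) =
      (∏ j ∈ range i, f (j + 1)) * f 0 * ∏ j ∈ range l, f (-(j + 1)) := by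
  rw [add_right_comm, prod_range_add, prod_range_succ, ← prod_range_reflect]
  congr 1
  · congr 1
    · refine prod_congr rfl fun j hj => congrArg f ?_
      have := mem_range.1 hj
      omega
    · rw [sub_self]
  · exact prod_congr rfl fun j _ => congrArg f (by push_cast; ring)

theorem prod_range_erase_int_sub {M : Type*} [CommMonoid M] (f : ℤ → M) (i l : ℕ) :
    ∏ j ∈ (range (i + l + 1)).erase i, f (i - j) =
      (∏ j ∈ range i, f (j + 1)) * ∏ j ∈ range l, f (-(j + 1)) := by
  have h := prod_range_int_sub (Function.update f 0 1) i l
  rw [Function.update_self, mul_one, ← prod_erase (a := i) _ (by simp)] at h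
  convert h using 2 with j hj j hj j hj
  · rw [Function.update_of_ne]
    have := ne_of_mem_erase hj
    omega
  · exact prod_congr rfl fun j _ => by rw [Function.update_of_ne (by omega)]
  · exact prod_congr rfl fun j _ => by rw [Function.update_of_ne (by omega)]

variable (n i l : ℕ)

theorem prod_erase_node_sub_node :
    ∏ j ∈ (range (i + l + 1)).erase i, ((n * i : ℚ) - n * j) =
      (-1) ^ l * n ^ (i + l) * i.factorial * l.factorial := by
  have h := prod_range_erase_int_sub (fun x : ℤ => (n * x : ℚ)) i l
  push_cast at h
  simp_rw [mul_sub, mul_neg, ← neg_mul] at h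
  rw [h, ← pow_card_mul_prod, ← pow_card_mul_prod, card_range, card_range,
    ← prod_range_add_one_eq_factorial, ← prod_range_add_one_eq_factorial]
  push_cast
  rw [neg_pow]
  ring

theorem prod_node_sub_shifted_node (hn : 1 ≤ n) :
    ∏ j ∈ range (i + l + 1), ((n * i : ℚ) - (n * j + 1)) =
      -((-1) ^ l * arithProd n (n - 1) i * arithProd n (n + 1) l) := by
  have h := prod_range_int_sub (fun x : ℤ => (n * x - 1 : ℚ)) i l
  push_cast at h
  simp_rw [mul_sub, sub_sub] at h
  have hneg (j : ℕ) : (n * -(j + 1) - 1 : ℚ) = -1 * (n * j + (n + 1)) := by ring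
  have hpos (j : ℕ) : (n * (j + 1) - 1 : ℚ) = n * j + (n - 1) := by ring
  simp_rw [hneg, hpos] at h
  rw [h, ← pow_card_mul_prod, card_range, arithProd, arithProd]
  push_cast [hn]
  ring

theorem prod_shifted_node_sub_node (hn : 1 ≤ n) :
    ∏ j ∈ range (i + l + 1), ((n * i + 1 : ℚ) - n * j) =
      (-1) ^ l * arithProd n (n + 1) i * arithProd n (n - 1) l := by
  have h := prod_range_int_sub (fun x : ℤ => (n * x + 1 : ℚ)) i l
  push_cast at h
  simp_rw [mul_sub, sub_add_eq_add_sub] at h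
  have hneg (j : ℕ) : (n * -(j + 1) + 1 : ℚ) = -1 * (n * j + (n - 1)) := by ring
  have hpos (j : ℕ) : (n * (j + 1) + 1 : ℚ) = n * j + (n + 1) := by ring
  simp_rw [hneg, hpos] at h
  rw [h, ← pow_card_mul_prod, card_range, arithProd, arithProd]
  push_cast [hn]
  ring

end ArithmeticProgressions

section PadeMoments

open Finset Polynomial

/-- The coefficient of `x ^ i * y ^ l` in the numerator of the diagonal Padé approximant of degree
`i + l` to the `n`-th root of `x / y`, normalised so as to be an integer. -/
def padeCoeff (n i l : ℕ) : ℕ :=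
  scaledMultichoose n (n - 1) i l * scaledMultichoose n (n + 1) l i

theorem padeCoeff_mul (n i l : ℕ) :
    padeCoeff n i l * (i.factorial * l.factorial * arithProd n (n - 1) i * arithProd n (n + 1) l) =
      n ^ (i + l) * arithProd n (n - 1) (i + l) * arithProd n (n + 1) (i + l) := by
  have h₁ := scaledMultichoose_mul_factorial_mul_arithProd n (n - 1) i l
  have h₂ := scaledMultichoose_mul_factorial_mul_arithProd n (n + 1) l i
  rw [add_comm l i] at h₂
  calc
    _ = (scaledMultichoose n (n - 1) i l * l.factorial * arithProd n (n - 1) i) *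
        (scaledMultichoose n (n + 1) l i * i.factorial * arithProd n (n + 1) l) := by
      rw [padeCoeff]; ring
    _ = _ := by rw [h₁, h₂]; ring

/-- The interpolation nodes of the Padé approximation problem: the exponents `n * i` of the
numerator and `n * i + 1` of the denominator. -/
def padeNode (n : ℕ) : ℕ ⊕ ℕ → ℚ :=
  Sum.elim (fun i => n * i) (fun i => n * i + 1)

theorem padeNode_injective {n : ℕ} (hn : 2 ≤ n) : Function.Injective (padeNode n) := by
  have hne (i j : ℕ) : n * i ≠ n * j + 1 := fun h => by
    have := congrArg (· % n) h
    simp only [Nat.mul_mod_right, Nat.mul_add_mod, Nat.mod_eq_of_lt hn] at this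
    omega
  rintro (i | i) (j | j) h <;> simp only [padeNode, Sum.elim_inl, Sum.elim_inr] at h <;>
    norm_cast at h
  · rw [Nat.eq_of_mul_eq_mul_left (by omega) h]
  · exact absurd h (hne i j)
  · exact absurd h.symm (hne j i)
  · rw [Nat.eq_of_mul_eq_mul_left (by omega) (Nat.succ.inj h)]

theorem sum_eval_padeNode_div_eq_zero {n : ℕ} (hn : 2 ≤ n) (k : ℕ) {g : ℚ[X]}
    (hg : g.degree < (2 * k + 1 : ℕ)) :
    ∑ i ∈ range (k + 1), g.eval (n * i : ℚ) /
        ((∏ j ∈ (range (k + 1)).erase i, ((n * i : ℚ) - n * j)) *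
          ∏ j ∈ range (k + 1), ((n * i : ℚ) - (n * j + 1))) +
      ∑ i ∈ range (k + 1), g.eval (n * i + 1 : ℚ) /
        ((∏ j ∈ range (k + 1), ((n * i + 1 : ℚ) - n * j)) *
          ∏ j ∈ (range (k + 1)).erase i, ((n * i : ℚ) - n * j)) = 0 := by
  have hcard : #((range (k + 1)).disjSum (range (k + 1))) = 2 * k + 2 := by
    rw [card_disjSum, card_range]
    ring
  have h := Lagrange.coeff_eq_sum (s := (range (k + 1)).disjSum (range (k + 1)))
    (padeNode_injective hn).injOn (P := g)
    (hcard ▸ hg.trans (by exact_mod_cast Nat.lt_succ_self _))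
  have herase_inl (i : ℕ) : ((range (k + 1)).disjSum (range (k + 1))).erase (Sum.inl i) =
      ((range (k + 1)).erase i).disjSum (range (k + 1)) := by
    ext x; rcases x with x | x <;> simp
  have herase_inr (i : ℕ) : ((range (k + 1)).disjSum (range (k + 1))).erase (Sum.inr i) =
      (range (k + 1)).disjSum ((range (k + 1)).erase i) := by
    ext x; rcases x with x | x <;> simp
  rw [hcard, coeff_eq_zero_of_degree_lt (by exact_mod_cast hg), sum_disjSum] at h
  simp only [herase_inl, herase_inr, prod_disjSum, padeNode, Sum.elim_inl, Sum.elim_inr,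
    add_sub_add_right_eq_sub] at h
  exact h.symm

/-- The factor that clears the denominators of the Lagrange weights at the nodes `padeNode n`. -/
def padeScale (n k : ℕ) : ℚ :=
  n ^ (2 * k) * arithProd n (n - 1) k * arithProd n (n + 1) k

theorem padeScale_eq (n i l : ℕ) :
    padeScale n (i + l) = padeCoeff n i l * (n ^ (i + l) * i.factorial * l.factorial *
      arithProd n (n - 1) i * arithProd n (n + 1) l) := by
  have h := congrArg (Nat.cast (R := ℚ)) (padeCoeff_mul n i l)
  push_cast at h
  rw [padeScale]
  linear_combination -(n : ℚ) ^ (i + l) * h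

section

variable {n : ℕ} (hn : 2 ≤ n) (i l : ℕ)
include hn

theorem padeScale_div_eq_neg_padeCoeff :
    padeScale n (i + l) / ((∏ j ∈ (range (i + l + 1)).erase i, ((n * i : ℚ) - n * j)) *
      ∏ j ∈ range (i + l + 1), ((n * i : ℚ) - (n * j + 1))) = -padeCoeff n i l := by
  have h₁ := arithProd_pos n (c := n - 1) (by omega) i
  have h₂ := arithProd_pos n n.succ_pos l
  rw [prod_erase_node_sub_node, prod_node_sub_shifted_node n i l (by omega), padeScale_eq]
  have hsign : ((-1 : ℚ) ^ l) ^ 2 = 1 := by rw [← pow_mul, mul_comm, pow_mul]; norm_num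
  rw [div_eq_iff (by simp [Nat.factorial_ne_zero, h₁.ne', h₂.ne', show n ≠ 0 by omega])]
  linear_combination (-(padeCoeff n i l * n ^ (i + l) * i.factorial * l.factorial *
    arithProd n (n - 1) i * arithProd n (n + 1) l) : ℚ) * hsign

theorem padeScale_div_eq_padeCoeff :
    padeScale n (i + l) / ((∏ j ∈ range (i + l + 1), ((n * i + 1 : ℚ) - n * j)) *
      ∏ j ∈ (range (i + l + 1)).erase i, ((n * i : ℚ) - n * j)) = padeCoeff n l i := by
  have h₁ := arithProd_pos n (c := n - 1) (by omega) l
  have h₂ := arithProd_pos n n.succ_pos i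
  rw [prod_erase_node_sub_node, prod_shifted_node_sub_node n i l (by omega), add_comm i l,
    padeScale_eq]
  have hsign : ((-1 : ℚ) ^ l) ^ 2 = 1 := by rw [← pow_mul, mul_comm, pow_mul]; norm_num
  rw [div_eq_iff (by simp [Nat.factorial_ne_zero, h₁.ne', h₂.ne', show n ≠ 0 by omega])]
  linear_combination (-(padeCoeff n l i * n ^ (l + i) * i.factorial * l.factorial *
    arithProd n (n - 1) l * arithProd n (n + 1) i) : ℚ) * hsign

end

theorem sum_padeCoeff_mul_eval {n : ℕ} (hn : 2 ≤ n) (k : ℕ) {g : ℚ[X]}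
    (hg : g.degree < (2 * k + 1 : ℕ)) :
    ∑ p ∈ antidiagonal k, (padeCoeff n p.2 p.1 : ℚ) * g.eval (n * p.1 + 1 : ℚ) =
      ∑ p ∈ antidiagonal k, (padeCoeff n p.1 p.2 : ℚ) * g.eval (n * p.1 : ℚ) := by
  rw [Nat.sum_antidiagonal_eq_sum_range_succ_mk, Nat.sum_antidiagonal_eq_sum_range_succ_mk,
    ← sub_eq_zero, sub_eq_neg_add, ← sum_neg_distrib,
    ← mul_zero (padeScale n k), ← sum_eval_padeNode_div_eq_zero hn k hg, mul_add, mul_sum, mul_sum]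
  congr 1 <;> refine sum_congr rfl fun i hi => ?_ <;>
    obtain ⟨l, rfl⟩ := Nat.exists_eq_add_of_le (Nat.lt_succ_iff.1 (mem_range.1 hi)) <;>
    dsimp only <;> rw [Nat.add_sub_cancel_left, mul_div_left_comm]
  · rw [padeScale_div_eq_neg_padeCoeff hn]
    ring
  · rw [padeScale_div_eq_padeCoeff hn]
    ring

theorem sum_padeCoeff_mul_choose {n : ℕ} (hn : 2 ≤ n) {j k : ℕ} (hj : j < 2 * k + 1) :
    ∑ p ∈ antidiagonal k, padeCoeff n p.2 p.1 * (n * p.1 + 1).choose j =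
      ∑ p ∈ antidiagonal k, padeCoeff n p.1 p.2 * (n * p.1).choose j := by
  have h := sum_padeCoeff_mul_eval hn k (g := descPochhammer ℚ j)
    (degree_le_natDegree.trans_lt (by rw [descPochhammer_natDegree]; exact_mod_cast hj))
  have heval (m : ℕ) : (descPochhammer ℚ j).eval (m : ℚ) = j.factorial * m.choose j := by
    rw [descPochhammer_eval_eq_descFactorial, Nat.descFactorial_eq_factorial_mul_choose]
    push_cast
    rfl
  have hnode (i : ℕ) : (n * i + 1 : ℚ) = (n * i + 1 : ℕ) := by push_cast; rfl
  have hnode' (i : ℕ) : (n * i : ℚ) = (n * i : ℕ) := by push_cast; rfl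
  simp only [hnode] at h
  simp only [hnode', heval, mul_left_comm _ (j.factorial : ℚ), ← mul_sum] at h
  exact_mod_cast mul_left_cancel₀ (Nat.cast_ne_zero.2 j.factorial_ne_zero) h

end PadeMoments

section PadeForm

open Finset Polynomial

theorem pow_mul_pow_sub_eq_sum {R : Type*} [CommRing R] (x y : R) {v N : ℕ} (h : v ≤ N) :
    x ^ v * y ^ (N - v) = ∑ j ∈ range (N + 1), (v.choose j : R) * ((x - y) ^ j * y ^ (N - j)) := by
  nth_rewrite 1 [← sub_add_cancel x y]
  rw [add_pow, sum_mul]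
  refine sum_subset_zero_on_sdiff (range_mono (by omega)) (fun j hj => ?_) fun j hj => ?_
  · rw [Nat.choose_eq_zero_of_lt (by simp at hj; omega)]
    simp
  · have hj' := mem_range.1 hj
    rw [show N - j = v - j + (N - v) by omega, pow_add]
    ring

/-- The homogeneous form `∑ padeCoeff n i l * x ^ i * y ^ l`, where `i + l = k`. The degree `k`
Padé approximant to the `n`-th root of `x / y` at `x = y` is the quotient of `padeForm n k x y` by
`padeForm n k y x`. -/
def padeForm (n k : ℕ) {R : Type*} [CommSemiring R] (x y : R) : R :=
  ∑ p ∈ antidiagonal k, (padeCoeff n p.1 p.2 : R) * (x ^ p.1 * y ^ p.2)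

theorem map_padeForm {R S : Type*} [CommSemiring R] [CommSemiring S] (φ : R →+* S) (n k : ℕ)
    (x y : R) : φ (padeForm n k x y) = padeForm n k (φ x) (φ y) := by
  simp [padeForm]

theorem padeForm_mul_right {R : Type*} [CommSemiring R] (n k : ℕ) (x y u : R) :
    padeForm n k (x * u) (y * u) = u ^ k * padeForm n k x y := by
  rw [padeForm, padeForm, mul_sum]
  refine sum_congr rfl fun p hp => ?_
  rw [← mem_antidiagonal.1 hp]
  ring

theorem padeForm_swap {R : Type*} [CommSemiring R] (n k : ℕ) (x y : R) :
    padeForm n k y x = ∑ p ∈ antidiagonal k, (padeCoeff n p.2 p.1 : R) * (x ^ p.1 * y ^ p.2) := by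
  rw [padeForm, ← Nat.sum_antidiagonal_swap]
  exact sum_congr rfl fun p _ => by rw [Prod.fst_swap, Prod.snd_swap, mul_comm (y ^ _)]

theorem sub_pow_dvd_mul_padeForm_sub {R : Type*} [CommRing R] {n : ℕ} (hn : 2 ≤ n) (k : ℕ)
    (x y : R) :
    (x - y) ^ (2 * k + 1) ∣
      x * padeForm n k (y ^ n) (x ^ n) - y * padeForm n k (x ^ n) (y ^ n) := by
  have hexpand {c : ℕ × ℕ → ℕ} {e : ℕ} (he : e ≤ 1) :
      ∑ p ∈ antidiagonal k, (c p : R) * (x ^ (n * p.1 + e) * y ^ (n * p.2 + 1 - e)) =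
        ∑ j ∈ range (n * k + 2), (∑ p ∈ antidiagonal k, c p * (n * p.1 + e).choose j : ℕ) *
          ((x - y) ^ j * y ^ (n * k + 1 - j)) := by
    simp only [Nat.cast_sum, sum_mul]
    rw [sum_comm]
    refine sum_congr rfl fun p hp => ?_
    obtain rfl := mem_antidiagonal.1 hp
    have hle : n * p.1 + e ≤ n * (p.1 + p.2) + 1 := by rw [mul_add]; omega
    rw [show n * p.2 + 1 - e = n * (p.1 + p.2) + 1 - (n * p.1 + e) by rw [mul_add]; omega,
      pow_mul_pow_sub_eq_sum x y hle, mul_sum]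
    exact sum_congr rfl fun j _ => by push_cast; ring
  have hnum : x * padeForm n k (y ^ n) (x ^ n) = ∑ p ∈ antidiagonal k,
      (padeCoeff n p.2 p.1 : R) * (x ^ (n * p.1 + 1) * y ^ (n * p.2 + 1 - 1)) := by
    rw [padeForm_swap, mul_sum]
    exact sum_congr rfl fun p _ => by rw [Nat.add_sub_cancel]; ring
  have hden : y * padeForm n k (x ^ n) (y ^ n) = ∑ p ∈ antidiagonal k,
      (padeCoeff n p.1 p.2 : R) * (x ^ (n * p.1 + 0) * y ^ (n * p.2 + 1 - 0)) := by
    rw [padeForm, mul_sum]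
    exact sum_congr rfl fun p _ => by rw [Nat.sub_zero]; ring
  rw [hnum, hden, hexpand (c := fun p => padeCoeff n p.2 p.1) le_rfl,
    hexpand (c := fun p => padeCoeff n p.1 p.2) zero_le_one, ← sum_sub_distrib]
  refine dvd_sum fun j _ => ?_
  rw [← sub_mul]
  rcases lt_or_ge j (2 * k + 1) with hj | hj
  · simp only [add_zero, sum_padeCoeff_mul_choose hn hj, sub_self, zero_mul, dvd_zero]
  · exact ((pow_dvd_pow _ hj).mul_right _).mul_left _

theorem X_sub_one_pow_dvd_of_dvd_expand {R : Type*} [CommRing R] [IsDomain R] {n : ℕ}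
    (hn : (n : R) ≠ 0) (m : ℕ) {D : R[X]} (h : (X - 1) ^ m ∣ expand R n D) : (X - 1) ^ m ∣ D := by
  have hgeom : ¬ (X - 1 : R[X]) ∣ ∑ i ∈ range n, X ^ i := by
    rwa [← C_1, dvd_iff_isRoot, IsRoot, eval_finsetSum, sum_congr rfl fun i _ => by
      rw [eval_pow, eval_X, one_pow], sum_const, card_range, nsmul_one]
  have hprime : Prime (X - 1 : R[X]) := C_1 (R := R) ▸ prime_X_sub_C 1
  induction m generalizing D with
  | zero => simp
  | succ m ih =>
    obtain ⟨E, rfl⟩ : (X - 1) ∣ D := by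
      have hroot := (dvd_pow_self _ m.succ_ne_zero).trans h
      rwa [← C_1, dvd_iff_isRoot, IsRoot, expand_eval, one_pow, ← IsRoot, ← dvd_iff_isRoot] at hroot
    rw [map_mul, map_sub, expand_X, map_one, ← mul_geom_sum, mul_assoc, pow_succ',
      mul_dvd_mul_iff_left hprime.ne_zero] at h
    rw [pow_succ']
    exact mul_dvd_mul_left _ (ih (hprime.pow_dvd_of_dvd_mul_left m hgeom h))

theorem eval_ne_zero_of_X_sub_C_pow_dvd {R : Type*} [CommRing R] [IsDomain R] {D : R[X]} {m : ℕ}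
    {a t : R} (hD : D ≠ 0) (hdvd : (X - C a) ^ m ∣ D) (hdeg : D.natDegree ≤ m) (ht : t ≠ a) :
    D.eval t ≠ 0 := by
  obtain ⟨q, rfl⟩ := hdvd
  have hq : q ≠ 0 := right_ne_zero_of_mul hD
  rw [natDegree_mul (left_ne_zero_of_mul hD) hq, natDegree_pow, natDegree_X_sub_C] at hdeg
  rw [eq_C_of_natDegree_eq_zero (p := q) (by omega)] at hq ⊢
  simp only [eval_mul, eval_pow, eval_sub, eval_X, eval_C]
  exact mul_ne_zero (pow_ne_zero m (sub_ne_zero.2 ht)) (C_ne_zero.1 hq)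

theorem padeCoeff_zero_left_mul_factorial (n l : ℕ) :
    padeCoeff n 0 l * l.factorial = n ^ l * arithProd n (n - 1) l := by
  have h := scaledMultichoose_mul_factorial n (n - 1) 0 l
  simpa [padeCoeff, arithProd, scaledMultichoose] using h

theorem padeCoeff_zero_right_mul_factorial (n i : ℕ) :
    padeCoeff n i 0 * i.factorial = n ^ i * arithProd n (n + 1) i := by
  have h := scaledMultichoose_mul_factorial n (n + 1) 0 i
  simpa [padeCoeff, arithProd, scaledMultichoose] using h

theorem padeCoeff_zero_mul_padeCoeff_ne {n : ℕ} (hn : 2 ≤ n) (k : ℕ) :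
    padeCoeff n 0 k * padeCoeff n (k + 1) 0 ≠ padeCoeff n 0 (k + 1) * padeCoeff n k 0 := by
  have hsucc (c : ℕ) : arithProd n c (k + 1) = arithProd n c k * (n * k + c) := prod_range_succ _ _
  intro h
  have hprod : n ^ k * arithProd n (n - 1) k * (n ^ (k + 1) * arithProd n (n + 1) (k + 1)) =
      n ^ (k + 1) * arithProd n (n - 1) (k + 1) * (n ^ k * arithProd n (n + 1) k) := by
    simp only [← padeCoeff_zero_left_mul_factorial, ← padeCoeff_zero_right_mul_factorial]
    linear_combination (k.factorial * (k + 1).factorial) * h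
  have hpos : 0 < n ^ k * n ^ (k + 1) * arithProd n (n - 1) k * arithProd n (n + 1) k := by
    have := arithProd_pos n (c := n - 1) (by omega) k
    have := arithProd_pos n n.succ_pos k
    positivity
  have hfactor : n * k + (n + 1) = n * k + (n - 1) := by
    refine Nat.eq_of_mul_eq_mul_left hpos ?_
    rw [hsucc, hsucc] at hprod
    linear_combination hprod
  omega

theorem natDegree_padeForm_X_one_le (n k : ℕ) (R : Type*) [CommSemiring R] :
    (padeForm n k (X : R[X]) 1).natDegree ≤ k := by
  refine natDegree_sum_le_of_forall_le _ _ fun p hp => ?_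
  rw [one_pow, mul_one, ← C_eq_natCast]
  exact (natDegree_C_mul_X_pow_le _ _).trans (Nat.le.intro (mem_antidiagonal.1 hp))

theorem natDegree_padeForm_one_X_le (n k : ℕ) (R : Type*) [CommSemiring R] :
    (padeForm n k (1 : R[X]) X).natDegree ≤ k := by
  refine natDegree_sum_le_of_forall_le _ _ fun p hp => ?_
  rw [one_pow, one_mul, ← C_eq_natCast]
  exact (natDegree_C_mul_X_pow_le _ _).trans
    (by have := mem_antidiagonal.1 hp; omega)

/-- The cross product of the Padé approximants of degrees `k` and `k + 1`, as a polynomial in the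
ratio of the two variables. -/
noncomputable def padeCross (n k : ℕ) (R : Type*) [CommRing R] : R[X] :=
  padeForm n k X 1 * padeForm n (k + 1) 1 X - padeForm n (k + 1) X 1 * padeForm n k 1 X

theorem natDegree_padeCross_le (n k : ℕ) (R : Type*) [CommRing R] :
    (padeCross n k R).natDegree ≤ 2 * k + 1 := by
  refine (natDegree_sub_le_of_le (m := k + (k + 1)) (n := (k + 1) + k) ?_ ?_).trans (by omega)
  · exact natDegree_mul_le_of_le (natDegree_padeForm_X_one_le n k R)
      (natDegree_padeForm_one_X_le n (k + 1) R)
  · exact natDegree_mul_le_of_le (natDegree_padeForm_X_one_le n (k + 1) R)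
      (natDegree_padeForm_one_X_le n k R)

theorem padeForm_zero_left {R : Type*} [CommSemiring R] (n k : ℕ) (y : R) :
    padeForm n k 0 y = padeCoeff n 0 k * y ^ k := by
  rw [padeForm, sum_eq_single (0, k)] <;> aesop

theorem padeForm_zero_right {R : Type*} [CommSemiring R] (n k : ℕ) (x : R) :
    padeForm n k x 0 = padeCoeff n k 0 * x ^ k := by
  rw [padeForm, sum_eq_single (k, 0)] <;> aesop

theorem X_sub_one_pow_dvd_padeCross {R : Type*} [CommRing R] [IsDomain R] [CharZero R] {n : ℕ}
    (hn : 2 ≤ n) (k : ℕ) : (X - 1) ^ (2 * k + 1) ∣ padeCross n k R := by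
  refine X_sub_one_pow_dvd_of_dvd_expand (n := n) (Nat.cast_ne_zero.2 (by omega)) _ ?_
  have hk := sub_pow_dvd_mul_padeForm_sub hn k (X : R[X]) 1
  have hk' := (pow_dvd_pow _ (by omega : 2 * k + 1 ≤ 2 * (k + 1) + 1)).trans
    (sub_pow_dvd_mul_padeForm_sub hn (k + 1) (X : R[X]) 1)
  simp only [padeCross, one_pow, one_mul, ← AlgHom.coe_toRingHom, map_sub, map_mul,
    map_padeForm, map_one] at hk hk' ⊢
  simp only [AlgHom.coe_toRingHom, expand_X]
  convert (hk'.mul_right (padeForm n k 1 (X ^ n))).sub (hk.mul_right (padeForm n (k + 1) 1 (X ^ n)))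
    using 1
  ring

theorem padeForm_mul_padeForm_swap_ne {F : Type*} [Field F] [CharZero F] {n : ℕ} (hn : 2 ≤ n)
    (k : ℕ) {x y : F} (hy : y ≠ 0) (hxy : x ≠ y) :
    padeForm n k x y * padeForm n (k + 1) y x ≠ padeForm n (k + 1) x y * padeForm n k y x := by
  have heval (t : F) : (padeCross n k F).eval t =
      padeForm n k t 1 * padeForm n (k + 1) 1 t - padeForm n (k + 1) t 1 * padeForm n k 1 t := by
    simp only [padeCross, eval_sub, eval_mul, ← coe_evalRingHom, map_padeForm, map_one]
    simp
  have hzero : (padeCross n k F).eval 0 ≠ 0 := by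
    rw [heval, sub_ne_zero]
    simp only [padeForm_zero_left, padeForm_zero_right, one_pow, mul_one]
    exact_mod_cast padeCoeff_zero_mul_padeCoeff_ne hn k
  have hratio : (padeCross n k F).eval (x / y) ≠ 0 := by
    refine eval_ne_zero_of_X_sub_C_pow_dvd (a := 1) (fun h => hzero (by rw [h, eval_zero]))
      (C_1 (R := F) ▸ X_sub_one_pow_dvd_padeCross hn k) (natDegree_padeCross_le n k F) ?_
    rwa [Ne, div_eq_one_iff_eq hy]
  rw [heval, sub_ne_zero] at hratio
  have hscale (i : ℕ) : padeForm n i x y = y ^ i * padeForm n i (x / y) 1 := by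
    rw [← padeForm_mul_right, div_mul_cancel₀ _ hy, one_mul]
  have hscale' (i : ℕ) : padeForm n i y x = y ^ i * padeForm n i 1 (x / y) := by
    rw [← padeForm_mul_right, div_mul_cancel₀ _ hy, one_mul]
  simp only [hscale, hscale']
  intro h
  refine hratio (mul_left_cancel₀ (pow_ne_zero (2 * k + 1) hy) ?_)
  linear_combination h

end PadeForm

section PadeBounds

open Finset Polynomial

theorem scaledMultichoose_le {n c : ℕ} (hc : c ≤ 2 * n) (r l : ℕ) :
    scaledMultichoose n c r l ≤ n ^ (2 * l) * 2 ^ (r + l + 1) := by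
  refine Nat.le_of_mul_le_mul_right ?_ l.factorial_pos
  rw [scaledMultichoose_mul_factorial]
  calc n ^ l * ∏ m ∈ range l, (n * (r + m) + c)
      ≤ n ^ l * ∏ m ∈ range l, (n * (r + 2 + m)) :=
        Nat.mul_le_mul_left _ (prod_le_prod' fun m _ => by linarith)
    _ = n ^ (2 * l) * (l.factorial * (r + l + 1).choose l) := by
        rw [← pow_card_mul_prod, card_range, ← Nat.ascFactorial_eq_prod_range,
          Nat.ascFactorial_eq_factorial_mul_choose]
        ring_nf
    _ ≤ n ^ (2 * l) * (l.factorial * 2 ^ (r + l + 1)) := by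
        gcongr
        exact Nat.choose_le_two_pow _ _
    _ = n ^ (2 * l) * 2 ^ (r + l + 1) * l.factorial := by ring

theorem padeCoeff_le {n : ℕ} (hn : 1 ≤ n) (i l : ℕ) :
    padeCoeff n i l ≤ (4 * n ^ 2) ^ (i + l + 1) :=
  calc padeCoeff n i l
      ≤ (n ^ (2 * l) * 2 ^ (i + l + 1)) * (n ^ (2 * i) * 2 ^ (l + i + 1)) :=
        Nat.mul_le_mul (scaledMultichoose_le (by omega) i l) (scaledMultichoose_le (by omega) l i)
    _ = 4 ^ (i + l + 1) * (n ^ 2) ^ (i + l) := by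
        rw [show 4 = 2 ^ 2 from rfl]
        simp only [← pow_mul, pow_add]
        ring
    _ ≤ 4 ^ (i + l + 1) * (n ^ 2) ^ (i + l + 1) :=
        Nat.mul_le_mul_left _ (Nat.pow_le_pow_right (by positivity) (by omega))
    _ = (4 * n ^ 2) ^ (i + l + 1) := (mul_pow ..).symm

theorem norm_padeForm_le {R : Type*} [SeminormedCommRing R] [NormOneClass R] {n : ℕ} (hn : 1 ≤ n)
    (k : ℕ) {x y : R} {B : ℝ} (hx : ‖x‖ ≤ B) (hy : ‖y‖ ≤ B) :
    ‖padeForm n k x y‖ ≤ (8 * n ^ 2) ^ (k + 1) * B ^ k := by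
  have hterm : ∀ p ∈ antidiagonal k,
      ‖(padeCoeff n p.1 p.2 : R) * (x ^ p.1 * y ^ p.2)‖ ≤ (4 * n ^ 2) ^ (k + 1) * B ^ k := by
    rintro ⟨i, l⟩ hil
    obtain rfl := mem_antidiagonal.1 hil
    have hcoeff : ‖(padeCoeff n i l : R)‖ ≤ (4 * n ^ 2) ^ (i + l + 1) :=
      (Nat.norm_cast_le _).trans (by
        rw [norm_one, mul_one]
        exact_mod_cast padeCoeff_le hn i l)
    have hmonomial : ‖x ^ i * y ^ l‖ ≤ B ^ (i + l) := by
      rw [pow_add]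
      exact norm_mul_le_of_le ((norm_pow_le x i).trans (by gcongr))
        ((norm_pow_le y l).trans (by gcongr))
    exact norm_mul_le_of_le hcoeff hmonomial
  have hB : 0 ≤ B := (norm_nonneg x).trans hx
  have hcard : (k + 1 : ℝ) ≤ 2 ^ (k + 1) := by exact_mod_cast (Nat.lt_two_pow_self).le
  calc ‖padeForm n k x y‖ ≤ #(antidiagonal k) • ((4 * n ^ 2) ^ (k + 1) * B ^ k) :=
        (norm_sum_le_of_le _ hterm).trans_eq (sum_const _)
    _ = (k + 1) * ((4 * n ^ 2) ^ (k + 1) * B ^ k) := by simp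
    _ ≤ 2 ^ (k + 1) * ((4 * n ^ 2) ^ (k + 1) * B ^ k) := by gcongr
    _ = (8 * n ^ 2) ^ (k + 1) * B ^ k := by rw [← mul_assoc, ← mul_pow]; ring_nf

theorem norm_eval_le_of_X_sub_C_pow_dvd {p : ℂ[X]} {a x : ℂ} {m : ℕ} {B r : ℝ} (hr : 0 < r)
    (hdvd : (X - C a) ^ m ∣ p) (hB : ∀ z, ‖z - a‖ = r → ‖p.eval z‖ ≤ B) (hx : ‖x - a‖ ≤ r) :
    ‖p.eval x‖ ≤ B * (‖x - a‖ / r) ^ m := by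
  obtain ⟨q, rfl⟩ := hdvd
  simp only [eval_mul, eval_pow, eval_sub, eval_X, eval_C, norm_mul, norm_pow] at hB ⊢
  have hq : ‖q.eval x‖ ≤ B / r ^ m := by
    refine Complex.norm_le_of_forall_mem_frontier_norm_le (Metric.isBounded_ball (x := a) (r := r))
      q.differentiable.diffContOnCl (fun z hz => ?_) ?_
    · rw [frontier_ball a hr.ne', mem_sphere_iff_norm] at hz
      rw [le_div_iff₀' (pow_pos hr m), ← hz]
      exact hB z hz
    · rwa [closure_ball a hr.ne', mem_closedBall_iff_norm]
  calc ‖x - a‖ ^ m * ‖q.eval x‖ ≤ ‖x - a‖ ^ m * (B / r ^ m) := by gcongr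
    _ = B * (‖x - a‖ / r) ^ m := by rw [div_pow]; ring

theorem norm_mul_padeForm_sub_le {n : ℕ} (hn : 2 ≤ n) (k : ℕ) {x y : ℂ} {M : ℝ} (hM : 0 < M)
    (hx : ‖x‖ ≤ M) (hy : ‖y‖ ≤ M) :
    ‖x * padeForm n k (y ^ n) (x ^ n) - y * padeForm n k (x ^ n) (y ^ n)‖ ≤
      (8 * n ^ 2 * 3 ^ n) ^ (k + 1) * M ^ (n * k + 1) * (‖x - y‖ / M) ^ (2 * k + 1) := by
  set p : ℂ[X] := X * padeForm n k (C y ^ n) (X ^ n) - C y * padeForm n k (X ^ n) (C y ^ n)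
  have heval (z : ℂ) :
      p.eval z = z * padeForm n k (y ^ n) (z ^ n) - y * padeForm n k (z ^ n) (y ^ n) := by
    simp only [p, ← coe_evalRingHom, map_sub, map_mul, map_padeForm, map_pow]
    simp
  have hcircle (z : ℂ) (hz : ‖z - y‖ = 2 * M) :
      ‖p.eval z‖ ≤ 4 * M * ((8 * n ^ 2) ^ (k + 1) * ((3 * M) ^ n) ^ k) := by
    have hz3 : ‖z‖ ≤ 3 * M := by linarith [norm_le_norm_sub_add z y]
    have hyn : ‖y ^ n‖ ≤ (3 * M) ^ n := by rw [norm_pow]; gcongr; linarith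
    have hzn : ‖z ^ n‖ ≤ (3 * M) ^ n := by rw [norm_pow]; gcongr
    rw [heval, show 4 * M = 3 * M + M by ring, add_mul]
    refine norm_sub_le_of_le (norm_mul_le_of_le hz3 ?_) (norm_mul_le_of_le hy ?_)
    · exact norm_padeForm_le (by omega) k hyn hzn
    · exact norm_padeForm_le (by omega) k hzn hyn
  have hdist : ‖x - y‖ ≤ 2 * M := by linarith [norm_sub_le x y]
  have h4 : (4 : ℝ) ≤ 3 ^ n := by linarith [pow_le_pow_right₀ (by norm_num : (1 : ℝ) ≤ 3) hn]
  rw [← heval]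
  calc ‖p.eval x‖
      ≤ 4 * M * ((8 * n ^ 2) ^ (k + 1) * ((3 * M) ^ n) ^ k) * (‖x - y‖ / (2 * M)) ^ (2 * k + 1) :=
        norm_eval_le_of_X_sub_C_pow_dvd (by positivity) (sub_pow_dvd_mul_padeForm_sub hn k X (C y))
          hcircle hdist
    _ ≤ 3 ^ n * M * ((8 * n ^ 2) ^ (k + 1) * ((3 * M) ^ n) ^ k) * (‖x - y‖ / M) ^ (2 * k + 1) := by
        gcongr
        linarith
    _ = (8 * n ^ 2 * 3 ^ n) ^ (k + 1) * M ^ (n * k + 1) * (‖x - y‖ / M) ^ (2 * k + 1) := by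
        simp only [mul_pow, ← pow_mul, pow_succ]
        ring

end PadeBounds

section LocalApproximation

theorem exists_rootOfUnity_norm_mul_sub_one_le {n : ℕ} (hn : n ≠ 0) {x : ℂ}
    (hx : ‖x ^ n - 1‖ ≤ 1 / 2) : ∃ ζ : ℂ, ζ ^ n = 1 ∧ ‖ζ * x - 1‖ ≤ 3 * ‖x ^ n - 1‖ := by
  have hxn : x ^ n ≠ 0 := fun h => by norm_num [h] at hx
  have hx0 : x ≠ 0 := ne_zero_pow hn hxn
  set s : ℂ := Complex.log (x ^ n) / n
  have hs : ‖s‖ ≤ 3 / 2 * ‖x ^ n - 1‖ := by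
    have hlog := Complex.norm_log_one_add_half_le_self hx
    rw [add_sub_cancel] at hlog
    have hn1 : (1 : ℝ) ≤ n := by exact_mod_cast Nat.one_le_iff_ne_zero.2 hn
    rw [norm_div, Complex.norm_natCast]
    exact (div_le_self (norm_nonneg _) hn1).trans hlog
  refine ⟨Complex.exp s / x, ?_, ?_⟩
  · rw [div_pow, ← Complex.exp_nat_mul, mul_div_cancel₀ _ (Nat.cast_ne_zero.2 hn),
      Complex.exp_log hxn, div_self hxn]
  · rw [div_mul_cancel₀ _ hx0]
    linarith [Complex.norm_exp_sub_one_le (x := s) (by linarith)]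

theorem exists_rootOfUnity_norm_mul_sub_le {n : ℕ} (hn : n ≠ 0) {e w u : ℂ} (hw : w ≠ 0)
    (h : w ^ n - u ^ n = e) (he : 2 * ‖e‖ ≤ ‖w‖ ^ n) :
    ∃ ζ : ℂ, ζ ^ n = 1 ∧ ‖ζ * u - w‖ ≤ 3 * ‖e‖ * (‖w‖ / ‖w‖ ^ n) := by
  have hwn : 0 < ‖w‖ ^ n := pow_pos (norm_pos_iff.2 hw) n
  have hratio : ‖(u / w) ^ n - 1‖ = ‖e‖ / ‖w‖ ^ n := by
    rw [div_pow, div_sub_one (pow_ne_zero n hw), norm_div, norm_pow, ← norm_neg, neg_sub, h]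
  obtain ⟨ζ, hζ, hle⟩ := exists_rootOfUnity_norm_mul_sub_one_le hn (x := u / w)
    (by rw [hratio, div_le_iff₀ hwn]; linarith)
  refine ⟨ζ, hζ, ?_⟩
  calc ‖ζ * u - w‖ = ‖ζ * (u / w) - 1‖ * ‖w‖ := by
        rw [← norm_mul]
        congr 1
        field_simp
    _ ≤ 3 * (‖e‖ / ‖w‖ ^ n) * ‖w‖ := by
        rw [← hratio]
        gcongr
    _ = 3 * ‖e‖ * (‖w‖ / ‖w‖ ^ n) := by ring

theorem max_one_norm_pow_le {n : ℕ} {e β w z : ℂ} (hβ : 0 < ‖β‖) (h : w ^ n - (β * z) ^ n = e) :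
    max 1 ‖(w, z)‖ ^ n ≤ 1 + ‖w‖ ^ n + (‖w‖ ^ n + ‖e‖) / ‖β‖ ^ n := by
  have hz : ‖z‖ ^ n ≤ (‖w‖ ^ n + ‖e‖) / ‖β‖ ^ n := by
    rw [le_div_iff₀ (by positivity), mul_comm, ← mul_pow, ← norm_mul, ← norm_pow, ← norm_pow,
      ← sub_sub_self (w ^ n) ((β * z) ^ n), h]
    exact norm_sub_le _ _
  have hw0 : 0 ≤ ‖w‖ ^ n := by positivity
  have hz0 : 0 ≤ ‖z‖ ^ n := by positivity
  rcases max_choice 1 ‖(w, z)‖ with hmax | hmax <;> rw [hmax]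
  · rw [one_pow]
    linarith
  · rcases max_choice ‖w‖ ‖z‖ with hnorm | hnorm <;> rw [Prod.norm_mk, hnorm] <;> linarith

theorem norm_mul_sub_le_of_pow_le {n : ℕ} {β w z : ℂ} {K : ℝ} (hK : max 1 ‖(w, z)‖ ^ n ≤ K) :
    ‖β * z - w‖ ≤ (‖β‖ + 1) * K * (max 1 ‖(w, z)‖ / max 1 ‖(w, z)‖ ^ n) := by
  set M := max 1 ‖(w, z)‖
  have hM : 0 < M := zero_lt_one.trans_le (le_max_left _ _)
  have hwM : ‖w‖ ≤ M := (norm_fst_le (w, z)).trans (le_max_right _ _)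
  have hzM : ‖z‖ ≤ M := (norm_snd_le (w, z)).trans (le_max_right _ _)
  calc ‖β * z - w‖ ≤ ‖β‖ * M + M := norm_sub_le_of_le (norm_mul_le_of_le le_rfl hzM) hwM
    _ = (‖β‖ + 1) * M ^ n * (M / M ^ n) := by field_simp
    _ ≤ (‖β‖ + 1) * K * (M / M ^ n) := by gcongr

theorem exists_rootOfUnity_norm_mul_mul_sub_le {n : ℕ} (hn : n ≠ 0) {e β w z : ℂ} (hβ : 0 < ‖β‖)
    (h : w ^ n - (β * z) ^ n = e) (hw : 1 + 2 * ‖e‖ ≤ ‖w‖ ^ n) :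
    ∃ ζ : ℂ, ζ ^ n = 1 ∧ ‖ζ * (β * z) - w‖ ≤
      3 * ‖e‖ * (2 + 2 / ‖β‖ ^ n) * (max 1 ‖(w, z)‖ / max 1 ‖(w, z)‖ ^ n) := by
  set M := max 1 ‖(w, z)‖
  set L : ℝ := 2 + 2 / ‖β‖ ^ n
  have hM : 0 < M := zero_lt_one.trans_le (le_max_left _ _)
  have hwM : ‖w‖ ≤ M := (norm_fst_le (w, z)).trans (le_max_right _ _)
  have he0 := norm_nonneg e
  have hwn : 0 < ‖w‖ ^ n := by linarith
  have hw0 : w ≠ 0 := fun hw0 => by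
    rw [hw0, norm_zero, zero_pow hn] at hwn
    exact hwn.false
  have hML : M ^ n ≤ L * ‖w‖ ^ n := (max_one_norm_pow_le hβ h).trans (by
    have : (‖w‖ ^ n + ‖e‖) / ‖β‖ ^ n ≤ 2 / ‖β‖ ^ n * ‖w‖ ^ n := by
      rw [div_mul_eq_mul_div]
      exact div_le_div_of_nonneg_right (by linarith) (by positivity)
    linarith)
  obtain ⟨ζ, hζ, hle⟩ := exists_rootOfUnity_norm_mul_sub_le hn hw0 h (by linarith)
  refine ⟨ζ, hζ, hle.trans ?_⟩
  rw [mul_assoc (3 * ‖e‖)]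
  gcongr
  calc ‖w‖ / ‖w‖ ^ n ≤ M / (M ^ n / L) :=
        div_le_div₀ hM.le hwM (by positivity) ((div_le_iff₀' (by positivity)).2 hML)
    _ = L * (M / M ^ n) := by field_simp

theorem exists_norm_root_mul_sub_le {n : ℕ} (hn : n ≠ 0) {a b : ℂ} (ha : a ≠ 0) (hb : b ≠ 0)
    (c : ℂ) : ∃ C : ℝ, 0 ≤ C ∧ ∀ p : ℂ × ℂ, a * p.1 ^ n - b * p.2 ^ n = c →
      ∃ α : ℂ, α ^ n = b / a ∧ ‖α * p.2 - p.1‖ ≤ C * (max 1 ‖p‖ / max 1 ‖p‖ ^ n) := by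
  obtain ⟨β, hβ⟩ := IsAlgClosed.exists_pow_nat_eq (b / a) (Nat.pos_of_ne_zero hn)
  have hβ0 : 0 < ‖β‖ := norm_pos_iff.2 (ne_zero_pow hn (hβ ▸ div_ne_zero hb ha))
  set e : ℂ := c / a
  set K : ℝ := 2 + 2 * ‖e‖ + (1 + 3 * ‖e‖) / ‖β‖ ^ n
  set L : ℝ := 2 + 2 / ‖β‖ ^ n
  refine ⟨max ((‖β‖ + 1) * K) (3 * ‖e‖ * L), by positivity, ?_⟩
  rintro ⟨w, z⟩ h
  have he : w ^ n - (β * z) ^ n = e := by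
    rw [mul_pow, hβ, eq_div_iff ha, ← h]
    field_simp
  rcases le_or_gt (‖w‖ ^ n) (1 + 2 * ‖e‖) with hw | hw
  · have hK : max 1 ‖(w, z)‖ ^ n ≤ K := (max_one_norm_pow_le hβ0 he).trans (by
      have : (‖w‖ ^ n + ‖e‖) / ‖β‖ ^ n ≤ (1 + 3 * ‖e‖) / ‖β‖ ^ n :=
        div_le_div_of_nonneg_right (by linarith) (by positivity)
      linarith)
    exact ⟨β, hβ, (norm_mul_sub_le_of_pow_le hK).trans (by gcongr; exact le_max_left _ _)⟩
  · obtain ⟨ζ, hζ, hle⟩ := exists_rootOfUnity_norm_mul_mul_sub_le hn hβ0 he hw.le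
    refine ⟨ζ * β, by rw [mul_pow, hζ, one_mul, hβ], ?_⟩
    rw [mul_assoc]
    exact hle.trans (by gcongr; exact le_max_right _ _)

/-- The obstruction whose vanishing means that `q.1 / q.2` equals the `k`-th Padé approximation to
the `n`-th root of `b / a` obtained by starting from the approximation `p.1 / p.2`. -/
def padeGap (n k : ℕ) {R : Type*} [CommRing R] (a b : R) (p q : R × R) : R :=
  p.2 * q.1 * padeForm n k (a * p.1 ^ n) (b * p.2 ^ n) -
    q.2 * p.1 * padeForm n k (b * p.2 ^ n) (a * p.1 ^ n)

theorem map_padeGap {R S : Type*} [CommRing R] [CommRing S] (φ : R →+* S) (n k : ℕ) (a b : R)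
    (p q : R × R) :
    φ (padeGap n k a b p q) = padeGap n k (φ a) (φ b) (Prod.map φ φ p) (Prod.map φ φ q) := by
  simp [padeGap, map_padeForm]

theorem mul_padeGap {R : Type*} [CommRing R] (n k : ℕ) (a α : R) (p q : R × R) :
    α * padeGap n k a (a * α ^ n) p q = a ^ k *
      (q.1 * (α * p.2 * padeForm n k (p.1 ^ n) ((α * p.2) ^ n) -
          p.1 * padeForm n k ((α * p.2) ^ n) (p.1 ^ n)) -
        (α * q.2 - q.1) * (p.1 * padeForm n k ((α * p.2) ^ n) (p.1 ^ n))) := by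
  rw [padeGap, show a * p.1 ^ n = p.1 ^ n * a by ring,
    show a * α ^ n * p.2 ^ n = (α * p.2) ^ n * a by ring, padeForm_mul_right, padeForm_mul_right]
  ring

theorem norm_mul_norm_padeGap_le {n : ℕ} (hn : 2 ≤ n) (k : ℕ) {a α : ℂ} {p q : ℂ × ℂ}
    {C M₁ M₂ : ℝ} (hC : 0 ≤ C) (hM₁ : 1 ≤ M₁) (hp : ‖p‖ ≤ M₁) (hq : ‖q‖ ≤ M₂)
    (hpα : ‖α * p.2 - p.1‖ ≤ C * (M₁ / M₁ ^ n)) (hqα : ‖α * q.2 - q.1‖ ≤ C * (M₂ / M₂ ^ n)) :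
    ‖α‖ * ‖padeGap n k a (a * α ^ n) p q‖ ≤
      ‖a‖ ^ k * (8 * n ^ 2 * 3 ^ n) ^ (k + 1) * (1 + C) ^ (n * k + 1) *
        (M₁ ^ (n * k + 1) * M₂ * ((M₁ ^ (n * (2 * k + 1)))⁻¹ + (M₂ ^ n)⁻¹)) := by
  have hM₁0 : 0 < M₁ := by linarith
  have hM₂0 : 0 ≤ M₂ := (norm_nonneg q).trans hq
  have hp₁ : ‖p.1‖ ≤ M₁ := (norm_fst_le p).trans hp
  have hp₁' : ‖p.1‖ ≤ (1 + C) * M₁ := hp₁.trans (le_mul_of_one_le_left hM₁0.le (by linarith))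
  have hu : ‖α * p.2‖ ≤ (1 + C) * M₁ := by
    have hshrink : M₁ / M₁ ^ n ≤ M₁ := div_le_self hM₁0.le (one_le_pow₀ hM₁)
    calc ‖α * p.2‖ = ‖(α * p.2 - p.1) + p.1‖ := by rw [sub_add_cancel]
      _ ≤ C * M₁ + M₁ := norm_add_le_of_le (hpα.trans (by gcongr)) hp₁
      _ = (1 + C) * M₁ := by ring
  have hratio : ‖α * p.2 - p.1‖ / ((1 + C) * M₁) ≤ (M₁ ^ n)⁻¹ := by
    rw [div_le_iff₀ (by positivity)]
    calc _ ≤ C * (M₁ / M₁ ^ n) := hpα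
      _ ≤ (1 + C) * (M₁ / M₁ ^ n) := by gcongr; linarith
      _ = (M₁ ^ n)⁻¹ * ((1 + C) * M₁) := by ring
  have hremainder := norm_mul_padeForm_sub_le hn k (by positivity) hu hp₁'
  have hvalue : ‖padeForm n k ((α * p.2) ^ n) (p.1 ^ n)‖ ≤
      (8 * n ^ 2) ^ (k + 1) * (((1 + C) * M₁) ^ n) ^ k :=
    norm_padeForm_le (by omega) k (by rw [norm_pow]; gcongr) (by rw [norm_pow]; gcongr)
  rw [← norm_mul, mul_padeGap, norm_mul, norm_pow]
  calc _ ≤ ‖a‖ ^ k *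
        (M₂ * ((8 * n ^ 2 * 3 ^ n) ^ (k + 1) * ((1 + C) * M₁) ^ (n * k + 1) *
          ((M₁ ^ n)⁻¹) ^ (2 * k + 1)) +
        (1 + C) * (M₂ / M₂ ^ n) *
          (M₁ * ((8 * n ^ 2 * 3 ^ n) ^ (k + 1) * (((1 + C) * M₁) ^ n) ^ k))) := by
        gcongr
        refine norm_sub_le_of_le
          (norm_mul_le_of_le ((norm_fst_le q).trans hq) (hremainder.trans ?_))
          (norm_mul_le_of_le (hqα.trans ?_) (norm_mul_le_of_le hp₁ (hvalue.trans ?_)))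
        · gcongr
        · gcongr
          linarith
        · refine mul_le_mul_of_nonneg_right (pow_le_pow_left₀ (by positivity) ?_ _) (by positivity)
          exact le_mul_of_one_le_right (by positivity) (one_le_pow₀ (by norm_num))
    _ = _ := by
        simp only [mul_pow, inv_pow, ← pow_mul, pow_succ]
        ring

theorem norm_padeGap_le {n : ℕ} (hn : 2 ≤ n) (k : ℕ) {a α : ℂ} (hα : α ≠ 0) {p q : ℂ × ℂ}
    {C M₁ M₂ : ℝ} (hC : 0 ≤ C) (hM₁ : 1 ≤ M₁) (hp : ‖p‖ ≤ M₁) (hq : ‖q‖ ≤ M₂)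
    (hpα : ‖α * p.2 - p.1‖ ≤ C * (M₁ / M₁ ^ n)) (hqα : ‖α * q.2 - q.1‖ ≤ C * (M₂ / M₂ ^ n)) :
    ‖padeGap n k a (a * α ^ n) p q‖ ≤
      ((1 + ‖α‖⁻¹) * (1 + ‖a‖) * (8 * n ^ 2 * 3 ^ n) * (1 + C) ^ n) ^ (k + 1) *
        (M₁ ^ (n * k + 1) * M₂ * ((M₁ ^ (n * (2 * k + 1)))⁻¹ + (M₂ ^ n)⁻¹)) := by
  have hα0 : 0 < ‖α‖ := norm_pos_iff.2 hα
  have hM₂0 : 0 ≤ M₂ := (norm_nonneg q).trans hq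
  have hbound := norm_mul_norm_padeGap_le hn k (a := a) hC hM₁ hp hq hpα hqα
  have hαpow : ‖α‖⁻¹ ≤ (1 + ‖α‖⁻¹) ^ (k + 1) := by
    have hinv := inv_nonneg.2 hα0.le
    exact (le_add_of_nonneg_left zero_le_one).trans
      (le_self_pow₀ (by linarith) k.succ_ne_zero)
  have hapow : ‖a‖ ^ k ≤ (1 + ‖a‖) ^ (k + 1) :=
    calc ‖a‖ ^ k ≤ (1 + ‖a‖) ^ k := by gcongr; linarith
      _ ≤ (1 + ‖a‖) ^ (k + 1) := pow_le_pow_right₀ (by linarith [norm_nonneg a]) k.le_succ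
  have hCpow : (1 + C) ^ (n * k + 1) ≤ ((1 + C) ^ n) ^ (k + 1) := by
    rw [← pow_mul]
    exact pow_le_pow_right₀ (by linarith) (by rw [mul_add]; omega)
  calc ‖padeGap n k a (a * α ^ n) p q‖
      = ‖α‖⁻¹ * (‖α‖ * ‖padeGap n k a (a * α ^ n) p q‖) := by field_simp
    _ ≤ (1 + ‖α‖⁻¹) ^ (k + 1) * ((1 + ‖a‖) ^ (k + 1) * (8 * n ^ 2 * 3 ^ n) ^ (k + 1) *
          ((1 + C) ^ n) ^ (k + 1) *
          (M₁ ^ (n * k + 1) * M₂ * ((M₁ ^ (n * (2 * k + 1)))⁻¹ + (M₂ ^ n)⁻¹))) := by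
        refine mul_le_mul hαpow (hbound.trans ?_) (by positivity) (by positivity)
        gcongr
    _ = _ := by
        simp only [mul_pow]
        ring

theorem exists_forall_norm_padeGap_le {n : ℕ} (hn : 2 ≤ n) {a b : ℂ} (ha : a ≠ 0) (hb : b ≠ 0)
    (c : ℂ) : ∃ C : ℝ, 1 ≤ C ∧ ∃ ρ : ℂ × ℂ → Polynomial.nthRootsFinset n (b / a),
      ∀ p q, a * p.1 ^ n - b * p.2 ^ n = c → a * q.1 ^ n - b * q.2 ^ n = c → ρ p = ρ q →
        ∀ k, ‖padeGap n k a b p q‖ ≤ C ^ (k + 1) * (max 1 ‖p‖ ^ (n * k + 1) * max 1 ‖q‖ *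
          ((max 1 ‖p‖ ^ (n * (2 * k + 1)))⁻¹ + (max 1 ‖q‖ ^ n)⁻¹)) := by
  have hn0 : 0 < n := by omega
  obtain ⟨C, hC, happrox⟩ := exists_norm_root_mul_sub_le hn0.ne' ha hb c
  obtain ⟨β, hβ⟩ := IsAlgClosed.exists_pow_nat_eq (b / a) hn0
  have hroot (p : ℂ × ℂ) : ∃ α : Polynomial.nthRootsFinset n (b / a),
      a * p.1 ^ n - b * p.2 ^ n = c →
        ‖(α : ℂ) * p.2 - p.1‖ ≤ C * (max 1 ‖p‖ / max 1 ‖p‖ ^ n) := by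
    by_cases hp : a * p.1 ^ n - b * p.2 ^ n = c
    · obtain ⟨α, hα, hle⟩ := happrox p hp
      exact ⟨⟨α, (Polynomial.mem_nthRootsFinset hn0 _).2 hα⟩, fun _ => hle⟩
    · exact ⟨⟨β, (Polynomial.mem_nthRootsFinset hn0 _).2 hβ⟩, fun h => absurd h hp⟩
  choose ρ hρ using hroot
  have hn1 : (1 : ℝ) ≤ n := by exact_mod_cast hn0
  refine ⟨(1 + ‖β‖⁻¹) * (1 + ‖a‖) * (8 * n ^ 2 * 3 ^ n) * (1 + C) ^ n, ?_, ρ, ?_⟩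
  · have h3 : (1 : ℝ) ≤ 3 ^ n := one_le_pow₀ (by norm_num)
    have hn2 : (1 : ℝ) ≤ 8 * n ^ 2 := by nlinarith
    refine one_le_mul_of_one_le_of_one_le (one_le_mul_of_one_le_of_one_le
      (one_le_mul_of_one_le_of_one_le ?_ ?_) (one_le_mul_of_one_le_of_one_le hn2 h3))
      (one_le_pow₀ ?_) <;>
    exact le_add_of_nonneg_right (by positivity)
  · intro p q hp hq hpq k
    have hα : (ρ p : ℂ) ^ n = b / a := (Polynomial.mem_nthRootsFinset hn0 _).1 (ρ p).2
    have hα0 : (ρ p : ℂ) ≠ 0 := ne_zero_pow hn0.ne' (by rw [hα]; exact div_ne_zero hb ha)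
    have hnorm : ‖(ρ p : ℂ)‖ = ‖β‖ := by
      refine (pow_left_inj₀ (norm_nonneg _) (norm_nonneg _) hn0.ne').1 ?_
      rw [← norm_pow, ← norm_pow, hα, hβ]
    have hqα := hρ q hq
    rw [← hpq] at hqα
    have hbound := norm_padeGap_le hn k (a := a) hα0 hC (le_max_left 1 ‖p‖) (le_max_right 1 ‖p‖)
      (le_max_right 1 ‖q‖) (hρ p hp) hqα
    rwa [hα, mul_div_cancel₀ b ha, hnorm] at hbound

end LocalApproximation

section ThueGapPrinciple

open NumberField

theorem padeGap_ne_zero_or_padeGap_succ_ne_zero {F : Type*} [Field F] [CharZero F] {n : ℕ}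
    (hn : 2 ≤ n) (k : ℕ) {a b : F} (hb : b ≠ 0) {p q : F × F} (hp : a * p.1 ^ n ≠ b * p.2 ^ n)
    (hp₂ : p.2 ≠ 0) (hq₁ : q.1 ≠ 0) : padeGap n k a b p q ≠ 0 ∨ padeGap n (k + 1) a b p q ≠ 0 := by
  by_contra! h
  obtain ⟨hk, hk'⟩ := h
  rw [padeGap, sub_eq_zero] at hk hk'
  refine padeForm_mul_padeForm_swap_ne hn k (mul_ne_zero hb (pow_ne_zero n hp₂)) hp
    (mul_left_cancel₀ (mul_ne_zero hp₂ hq₁) ?_)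
  linear_combination padeForm n (k + 1) (b * p.2 ^ n) (a * p.1 ^ n) * hk -
    padeForm n k (b * p.2 ^ n) (a * p.1 ^ n) * hk'

theorem pow_mul_inv_add_inv_le_two_mul_exp {n k : ℕ} (hn : 3 ≤ n) (hk : 10 ≤ k) {M₁ M₂ δ : ℝ}
    (hM₁ : 1 ≤ M₁) (hM₂ : 1 ≤ M₂) (hlower : (2 * k - 2) * Real.log M₁ ≤ Real.log M₂ + δ)
    (hupper : Real.log M₂ ≤ (2 * k + 2) * Real.log M₁ + δ) (hδ : 0 ≤ δ) :
    M₁ ^ (n * k + 1) * M₂ * ((M₁ ^ (n * (2 * k + 1)))⁻¹ + (M₂ ^ n)⁻¹) ≤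
      2 * Real.exp (-(k / 2) * Real.log M₁ + n * δ) := by
  have hlog₁ : 0 ≤ Real.log M₁ := Real.log_nonneg hM₁
  have hn' : (3 : ℝ) ≤ n := by exact_mod_cast hn
  have hk' : (10 : ℝ) ≤ k := by exact_mod_cast hk
  have hexp : Real.exp (Real.log M₁) = M₁ ∧ Real.exp (Real.log M₂) = M₂ :=
    ⟨Real.exp_log (by linarith), Real.exp_log (by linarith)⟩
  generalize Real.log M₁ = m₁ at *
  generalize Real.log M₂ = m₂ at *
  rw [← hexp.1, ← hexp.2, mul_add, two_mul (Real.exp _)]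
  simp only [← Real.exp_nat_mul, ← Real.exp_neg, ← Real.exp_add]
  push_cast
  have hnk : 0 ≤ (n - 3) * (k - 10) * m₁ :=
    mul_nonneg (mul_nonneg (by linarith) (by linarith)) hlog₁
  have hnm : 0 ≤ (n - 3) * m₁ := mul_nonneg (by linarith) hlog₁
  have hkm : 0 ≤ (k - 10) * m₁ := mul_nonneg (by linarith) hlog₁
  refine add_le_add (Real.exp_le_exp.2 ?_) (Real.exp_le_exp.2 ?_)
  · have hδn : δ ≤ n * δ := le_mul_of_one_le_left hδ (by linarith)
    linarith
  · have hn1 := mul_le_mul_of_nonneg_left hlower (show (0 : ℝ) ≤ n - 1 by linarith)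
    linarith

theorem mul_le_add_of_abs_div_sub_div_le {h₁ h₂ m₁ m₂ r ε : ℝ} (hh₁ : 0 < h₁) (hh₂ : 0 < h₂)
    (hm₁ : 0 ≤ m₁) (hclose : |m₁ / h₁ - m₂ / h₂| ≤ ε) (hr : r * h₁ ≤ h₂) :
    r * m₁ ≤ m₂ + h₂ * ε := by
  calc r * m₁ = r * h₁ * (m₁ / h₁) := by field_simp
    _ ≤ h₂ * (m₁ / h₁) := by gcongr
    _ ≤ h₂ * (m₂ / h₂ + ε) := by
        gcongr
        linarith [(abs_le.1 hclose).2]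
    _ = m₂ + h₂ * ε := by field_simp

theorem le_mul_add_of_abs_div_sub_div_le {h₁ h₂ m₁ m₂ r ε : ℝ} (hh₁ : 0 < h₁) (hh₂ : 0 < h₂)
    (hm₁ : 0 ≤ m₁) (hclose : |m₁ / h₁ - m₂ / h₂| ≤ ε) (hr : h₂ ≤ r * h₁) :
    m₂ ≤ r * m₁ + h₂ * ε := by
  calc m₂ = h₂ * (m₂ / h₂) := by field_simp
    _ ≤ h₂ * (m₁ / h₁ + ε) := by
        gcongr
        linarith [(abs_le.1 hclose).1]
    _ ≤ r * h₁ * (m₁ / h₁) + h₂ * ε := by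
        rw [mul_add]
        gcongr
    _ = r * m₁ + h₂ * ε := by field_simp

variable {K : Type*} [Field K]

/-- The size of a pair of algebraic integers at a complex embedding, truncated below at `1`. -/
noncomputable def localSize (σ : K →+* ℂ) (p : 𝓞 K × 𝓞 K) : ℝ :=
  max 1 ‖(σ p.1, σ p.2)‖

theorem one_le_localSize (σ : K →+* ℂ) (p : 𝓞 K × 𝓞 K) : 1 ≤ localSize σ p :=
  le_max_left _ _

theorem log_localSize_nonneg (σ : K →+* ℂ) (p : 𝓞 K × 𝓞 K) : 0 ≤ Real.log (localSize σ p) :=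
  Real.log_nonneg (one_le_localSize σ p)

variable [NumberField K]

/-- The unnormalized logarithmic height of a pair of algebraic integers. There are no
contributions from finite places because the coordinates are integral. -/
noncomputable def logSize (p : 𝓞 K × 𝓞 K) : ℝ :=
  ∑ σ : K →+* ℂ, Real.log (localSize σ p)

/-- The share of the embedding `σ` in the logarithmic height of a pair. It is the junk value `0`
when the height vanishes. -/
noncomputable def sizeShare (σ : K →+* ℂ) (p : 𝓞 K × 𝓞 K) : ℝ :=
  Real.log (localSize σ p) / logSize p

theorem log_localSize_le_logSize (σ : K →+* ℂ) (p : 𝓞 K × 𝓞 K) :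
    Real.log (localSize σ p) ≤ logSize p :=
  Finset.single_le_sum (fun τ _ => log_localSize_nonneg τ p) (Finset.mem_univ σ)

theorem logSize_nonneg (p : 𝓞 K × 𝓞 K) : 0 ≤ logSize p :=
  Finset.sum_nonneg fun σ _ => log_localSize_nonneg σ p

theorem sizeShare_mem_Icc (σ : K →+* ℂ) (p : 𝓞 K × 𝓞 K) : sizeShare σ p ∈ Set.Icc 0 1 :=
  ⟨div_nonneg (log_localSize_nonneg σ p) (logSize_nonneg p),
    div_le_one_of_le₀ (log_localSize_le_logSize σ p) (logSize_nonneg p)⟩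

theorem finite_setOf_logSize_le (B : ℝ) : {p : 𝓞 K × 𝓞 K | logSize p ≤ B}.Finite := by
  have hbounded : {x : 𝓞 K | ∀ σ : K →+* ℂ, ‖σ x‖ ≤ Real.exp B}.Finite :=
    ((Embeddings.finite_of_norm_le K ℂ (Real.exp B)).preimage
      RingOfIntegers.coe_injective.injOn).subset fun x hx => ⟨x.2, hx⟩
  refine (hbounded.prod hbounded).subset fun p hp => ?_
  have hsize (σ : K →+* ℂ) : ‖(σ p.1, σ p.2)‖ ≤ Real.exp B := by
    refine (le_max_right _ _).trans ((Real.log_le_iff_le_exp ?_).1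
      ((log_localSize_le_logSize σ p).trans hp))
    exact zero_lt_one.trans_le (one_le_localSize σ p)
  exact ⟨fun σ => (norm_fst_le _).trans (hsize σ), fun σ => (norm_snd_le _).trans (hsize σ)⟩

theorem norm_le_exp_of_abs_sizeShare_sub_le {n k : ℕ} (hn : 3 ≤ n) (hk : 10 ≤ k)
    {p q : 𝓞 K × 𝓞 K} (hp : 0 < logSize p) (hlower : (2 * k - 2) * logSize p ≤ logSize q)
    (hupper : logSize q ≤ (2 * k + 2) * logSize p) {ε : ℝ} (σ : K →+* ℂ)
    (hclose : |sizeShare σ p - sizeShare σ q| ≤ ε) :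
    localSize σ p ^ (n * k + 1) * localSize σ q *
        ((localSize σ p ^ (n * (2 * k + 1)))⁻¹ + (localSize σ q ^ n)⁻¹) ≤
      2 * Real.exp (-(k / 2) * Real.log (localSize σ p) + n * (logSize q * ε)) := by
  have hk' : (10 : ℝ) ≤ k := by exact_mod_cast hk
  have hq : 0 < logSize q := (mul_pos (by linarith) hp).trans_le hlower
  have hε : 0 ≤ ε := (abs_nonneg _).trans hclose
  exact pow_mul_inv_add_inv_le_two_mul_exp hn hk (one_le_localSize σ p) (one_le_localSize σ q)
    (mul_le_add_of_abs_div_sub_div_le hp hq (log_localSize_nonneg σ p) hclose hlower)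
    (le_mul_add_of_abs_div_sub_div_le hp hq (log_localSize_nonneg σ p) hclose hupper)
    (mul_nonneg hq.le hε)

theorem one_le_prod_norm_embeddings {x : 𝓞 K} (hx : x ≠ 0) : 1 ≤ ∏ σ : K →+* ℂ, ‖σ x‖ := by
  have hnorm : ∏ σ : K →+* ℂ, ‖σ x‖ = |(Algebra.norm ℤ x : ℝ)| := by
    rw [Fintype.prod_equiv (RingHom.equivRatAlgHom K ℂ) (fun σ => ‖σ (x : K)‖)
      (fun σ => ‖σ (x : K)‖) fun _ => rfl, ← norm_prod,
      ← Algebra.norm_eq_prod_embeddings ℚ ℂ (x : K), ← Algebra.coe_norm_int]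
    simp
  rw [hnorm]
  exact_mod_cast Int.one_le_abs (Algebra.norm_ne_zero_iff.2 hx)

theorem eq_zero_of_norm_le_exp {x : 𝓞 K} {E : (K →+* ℂ) → ℝ}
    (hx : ∀ σ : K →+* ℂ, ‖σ x‖ ≤ Real.exp (E σ)) (hE : ∑ σ, E σ < 0) : x = 0 := by
  by_contra hne
  have hprod : ∏ σ : K →+* ℂ, ‖σ x‖ ≤ Real.exp (∑ σ, E σ) := by
    rw [Real.exp_sum]
    exact Finset.prod_le_prod (fun σ _ => norm_nonneg _) fun σ _ => hx σ
  exact absurd ((one_le_prod_norm_embeddings hne).trans hprod) (not_le.2 (Real.exp_lt_one_iff.2 hE))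

variable {n : ℕ} {a b : 𝓞 K} {p q : 𝓞 K × 𝓞 K} {C : (K →+* ℂ) → ℝ}

theorem padeGap_eq_zero_of_norm_le (hn : 3 ≤ n) {k : ℕ} (hk : 10 ≤ k) (hC : ∀ σ, 1 ≤ C σ)
    (hgap : ∀ σ : K →+* ℂ, ‖σ (padeGap n k a b p q : 𝓞 K)‖ ≤ C σ ^ (k + 1) *
      (localSize σ p ^ (n * k + 1) * localSize σ q *
        ((localSize σ p ^ (n * (2 * k + 1)))⁻¹ + (localSize σ q ^ n)⁻¹)))
    (hlarge : 8 * ∑ σ, Real.log (2 * C σ) < logSize p)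
    (hclose : ∀ σ, |sizeShare σ p - sizeShare σ q| ≤
      (16 * n * Fintype.card (K →+* ℂ) : ℝ)⁻¹)
    (hlower : (2 * k - 2) * logSize p ≤ logSize q)
    (hupper : logSize q ≤ (2 * k + 2) * logSize p) : padeGap n k a b p q = 0 := by
  have hk' : (10 : ℝ) ≤ k := by exact_mod_cast hk
  have hlogC : 0 ≤ ∑ σ, Real.log (2 * C σ) :=
    Finset.sum_nonneg fun σ _ => Real.log_nonneg (by linarith [hC σ])
  have hp : 0 < logSize p := by linarith
  set ε : ℝ := (16 * n * Fintype.card (K →+* ℂ) : ℝ)⁻¹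
  refine eq_zero_of_norm_le_exp (E := fun σ => (k + 1) * Real.log (2 * C σ) +
    (-(k / 2) * Real.log (localSize σ p) + n * (logSize q * ε))) (fun σ => ?_) ?_
  · have hCσ : 0 < 2 * C σ := by linarith [hC σ]
    calc ‖σ (padeGap n k a b p q : 𝓞 K)‖
        ≤ C σ ^ (k + 1) *
          (2 * Real.exp (-(k / 2) * Real.log (localSize σ p) + n * (logSize q * ε))) :=
          (hgap σ).trans (mul_le_mul_of_nonneg_left
            (norm_le_exp_of_abs_sizeShare_sub_le hn hk hp hlower hupper σ (hclose σ))
            (pow_nonneg (by linarith) _))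
      _ ≤ (2 * C σ) ^ (k + 1) *
          Real.exp (-(k / 2) * Real.log (localSize σ p) + n * (logSize q * ε)) := by
          rw [← mul_assoc, mul_pow, mul_comm (C σ ^ _)]
          gcongr
          · exact pow_nonneg (by linarith) _
          · exact le_self_pow₀ one_le_two k.succ_ne_zero
      _ = Real.exp ((k + 1) * Real.log (2 * C σ) +
          (-(k / 2) * Real.log (localSize σ p) + n * (logSize q * ε))) := by
          rw [Real.exp_add ((k + 1) * _), ← Nat.cast_add_one, Real.exp_nat_mul, Real.exp_log hCσ]
  · have hshare : Fintype.card (K →+* ℂ) * (n * (logSize q * ε)) = logSize q / 16 := by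
      have hn0 : (n : ℝ) ≠ 0 := by exact_mod_cast (by omega : n ≠ 0)
      have hcard0 : (Fintype.card (K →+* ℂ) : ℝ) ≠ 0 := by exact_mod_cast Fintype.card_ne_zero
      simp only [ε]
      field_simp
    rw [Finset.sum_add_distrib, Finset.sum_add_distrib, ← Finset.mul_sum, ← Finset.mul_sum,
      Finset.sum_const, Finset.card_univ, nsmul_eq_mul, hshare]
    change _ + (-(k / 2) * logSize p + _) < 0
    nlinarith

theorem logSize_lt_of_norm_padeGap_le (hn : 3 ≤ n) (hC : ∀ σ, 1 ≤ C σ) (hb : b ≠ 0)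
    (hp : a * p.1 ^ n ≠ b * p.2 ^ n) (hp₂ : p.2 ≠ 0) (hq₁ : q.1 ≠ 0)
    (hgap : ∀ k, ∀ σ : K →+* ℂ, ‖σ (padeGap n k a b p q : 𝓞 K)‖ ≤ C σ ^ (k + 1) *
      (localSize σ p ^ (n * k + 1) * localSize σ q *
        ((localSize σ p ^ (n * (2 * k + 1)))⁻¹ + (localSize σ q ^ n)⁻¹)))
    (hlarge : 8 * ∑ σ, Real.log (2 * C σ) < logSize p)
    (hclose : ∀ σ, |sizeShare σ p - sizeShare σ q| ≤
      (16 * n * Fintype.card (K →+* ℂ) : ℝ)⁻¹) : logSize q < 22 * logSize p := by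
  by_contra! hratio
  have hsize : 0 < logSize p := hlarge.trans_le' <| mul_nonneg (by norm_num) <|
    Finset.sum_nonneg fun σ _ => Real.log_nonneg (by linarith [hC σ])
  set r : ℝ := logSize q / logSize p
  have hq : logSize q = r * logSize p := (div_mul_cancel₀ _ hsize.ne').symm
  have hr : 22 ≤ r := (le_div_iff₀ hsize).2 hratio
  have hk₀ : (⌊r / 2⌋₊ : ℝ) ≤ r / 2 := Nat.floor_le (by linarith)
  have hk₁ : r / 2 < ⌊r / 2⌋₊ + 1 := Nat.lt_floor_add_one _
  have hk : 10 ≤ ⌊r / 2⌋₊ := Nat.le_floor (by push_cast; linarith)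
  have hvanish (k : ℕ) (hk : 10 ≤ k) (hlower : (2 * k - 2 : ℝ) ≤ r) (hupper : r ≤ 2 * k + 2) :
      padeGap n k (a : K) b (Prod.map (↑) (↑) p) (Prod.map (↑) (↑) q) = 0 := by
    have hzero := padeGap_eq_zero_of_norm_le hn hk hC (hgap k) hlarge hclose
      (by rw [hq]; gcongr) (by rw [hq]; gcongr)
    simpa only [map_padeGap, map_zero] using congrArg (algebraMap (𝓞 K) K) hzero
  have hinj := FaithfulSMul.algebraMap_injective (𝓞 K) K
  rcases padeGap_ne_zero_or_padeGap_succ_ne_zero (n := n) (by omega) ⌊r / 2⌋₊ (a := (a : K))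
    (b := b) (p := Prod.map (↑) (↑) p) (q := Prod.map (↑) (↑) q) (by simpa using hb)
    (fun h => hp (hinj (by rw [map_mul, map_mul, map_pow, map_pow]; exact h)))
    (by simpa using hp₂) (by simpa using hq₁)
    with h | h
  · exact h (hvanish _ hk (by linarith) (by linarith))
  · exact h (hvanish _ (by omega) (by push_cast; linarith) (by push_cast; linarith))

end ThueGapPrinciple

section ThueEquation

open NumberField

variable {K : Type*} [Field K]

theorem exists_forall_norm_embedding_padeGap_le {n : ℕ} (hn : 2 ≤ n) {a b : 𝓞 K} (ha : a ≠ 0)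
    (hb : b ≠ 0) (c : 𝓞 K) (σ : K →+* ℂ) :
    ∃ C : ℝ, 1 ≤ C ∧ ∃ ρ : 𝓞 K × 𝓞 K → Polynomial.nthRootsFinset n (σ b / σ a),
      ∀ p q, a * p.1 ^ n - b * p.2 ^ n = c → a * q.1 ^ n - b * q.2 ^ n = c → ρ p = ρ q →
        ∀ k, ‖σ (padeGap n k a b p q : 𝓞 K)‖ ≤ C ^ (k + 1) *
          (localSize σ p ^ (n * k + 1) * localSize σ q *
            ((localSize σ p ^ (n * (2 * k + 1)))⁻¹ + (localSize σ q ^ n)⁻¹)) := by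
  set φ : 𝓞 K →+* ℂ := σ.comp (algebraMap (𝓞 K) K)
  obtain ⟨C, hC, ρ, hρ⟩ := exists_forall_norm_padeGap_le hn (a := φ a) (b := φ b)
    (by simpa [φ] using ha) (by simpa [φ] using hb) (φ c)
  have hsol {p : 𝓞 K × 𝓞 K} (hp : a * p.1 ^ n - b * p.2 ^ n = c) :
      φ a * φ p.1 ^ n - φ b * φ p.2 ^ n = φ c := by
    rw [← hp, map_sub, map_mul, map_mul, map_pow, map_pow]
  refine ⟨C, hC, fun p => ρ (Prod.map φ φ p), fun p q hp hq hpq k => ?_⟩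
  change ‖φ (padeGap n k a b p q)‖ ≤ _
  rw [map_padeGap]
  exact hρ _ _ (hsol hp) (hsol hq) hpq k

theorem abs_sub_le_inv_of_floor_mul_eq {x y N : ℝ} (hN : 0 < N) (h : ⌊x * N⌋ = ⌊y * N⌋) :
    |x - y| ≤ N⁻¹ := by
  have habs := Int.abs_sub_lt_one_of_floor_eq_floor h
  rw [← sub_mul, abs_mul, abs_of_pos hN] at habs
  rw [← one_div, le_div_iff₀ hN]
  exact habs.le

variable [NumberField K]

theorem finite_setOf_thue_of_ne_zero {n : ℕ} (hn : 3 ≤ n) {a b c : 𝓞 K} (ha : a ≠ 0) (hb : b ≠ 0)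
    (hc : c ≠ 0) :
    {p : 𝓞 K × 𝓞 K | a * p.1 ^ n - b * p.2 ^ n = c ∧ p.1 ≠ 0 ∧ p.2 ≠ 0}.Finite := by
  choose C hC ρ hρ using exists_forall_norm_embedding_padeGap_le (by omega : 2 ≤ n) ha hb c
  set N : ℝ := 16 * n * Fintype.card (K →+* ℂ)
  have hN : 0 < N := by
    have : 0 < n := by omega
    positivity
  have hbox : (Set.univ.pi fun _ : K →+* ℂ => Set.Icc (0 : ℤ) ⌊N⌋).Finite :=
    Set.Finite.pi fun _ => Set.finite_Icc _ _
  refine Set.Finite.of_finite_fibers (fun p => (fun σ => ρ σ p, fun σ => ⌊sizeShare σ p * N⌋))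
    ((Set.finite_univ.prod hbox).subset ?_) ?_
  · rintro _ ⟨p, -, rfl⟩
    refine ⟨Set.mem_univ _, fun σ _ => ?_⟩
    obtain ⟨hnonneg, hle⟩ := sizeShare_mem_Icc σ p
    exact ⟨Int.floor_nonneg.2 (mul_nonneg hnonneg hN.le),
      Int.floor_le_floor (mul_le_of_le_one_left hN.le hle)⟩
  · intro label _
    by_contra hinf
    have hunbounded (B : ℝ) : ∃ p ∈ {p : 𝓞 K × 𝓞 K | a * p.1 ^ n - b * p.2 ^ n = c ∧ p.1 ≠ 0 ∧
        p.2 ≠ 0} ∩ (fun p => (fun σ => ρ σ p, fun σ => ⌊sizeShare σ p * N⌋)) ⁻¹' {label},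
        B < logSize p := by
      by_contra! h
      exact hinf ((finite_setOf_logSize_le B).subset h)
    obtain ⟨p, ⟨⟨hp, -, hp₂⟩, hplabel⟩, hlarge⟩ := hunbounded (8 * ∑ σ, Real.log (2 * C σ))
    obtain ⟨q, ⟨⟨hq, hq₁, -⟩, hqlabel⟩, hratio⟩ := hunbounded (22 * logSize p)
    obtain ⟨hroots, hshares⟩ := Prod.ext_iff.1 (hplabel.trans hqlabel.symm)
    refine hratio.not_gt (logSize_lt_of_norm_padeGap_le hn hC hb
      (fun h => hc (hp.symm.trans (sub_eq_zero.2 h))) hp₂ hq₁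
      (fun k σ => hρ σ p q hp hq (congrFun hroots σ) k) hlarge fun σ => ?_)
    exact abs_sub_le_inv_of_floor_mul_eq hN (congrFun hshares σ)

theorem finite_setOf_mul_pow_eq {R : Type*} [CommRing R] [IsDomain R] {n : ℕ} (hn : n ≠ 0) {b : R}
    (hb : b ≠ 0) (c : R) : {z : R | b * z ^ n = c}.Finite := by
  have hdeg : (Polynomial.C b * Polynomial.X ^ n - Polynomial.C c).natDegree = n := by
    rw [Polynomial.natDegree_sub_C, Polynomial.natDegree_C_mul_X_pow n b hb]
  have hne : Polynomial.C b * Polynomial.X ^ n - Polynomial.C c ≠ 0 :=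
    Polynomial.ne_zero_of_natDegree_gt (hdeg.symm ▸ Nat.pos_of_ne_zero hn)
  refine (Polynomial.finite_setOfPred_isRoot hne).subset fun z hz => ?_
  simpa [Polynomial.IsRoot, sub_eq_zero] using hz

theorem finite_setOf_thue {n : ℕ} (hn : 3 ≤ n) {a b c : 𝓞 K} (ha : a ≠ 0) (hb : b ≠ 0)
    (hc : c ≠ 0) : {p : 𝓞 K × 𝓞 K | a * p.1 ^ n - b * p.2 ^ n = c}.Finite := by
  have hn0 : n ≠ 0 := by omega
  refine ((finite_setOf_thue_of_ne_zero hn ha hb hc).union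
    (((Set.finite_singleton 0).prod (finite_setOf_mul_pow_eq hn0 hb (-c))).union
      ((finite_setOf_mul_pow_eq hn0 ha c).prod (Set.finite_singleton 0)))).subset ?_
  rintro ⟨x, y⟩ hxy
  by_cases hx : x = 0
  · subst hx
    exact .inr (.inl ⟨rfl, by simp [← hxy.out, hn0]⟩)
  · by_cases hy : y = 0
    · subst hy
      exact .inr (.inr ⟨by simp [← hxy.out, hn0], rfl⟩)
    · exact .inl ⟨hxy, hx, hy⟩

end ThueEquation

section UnitEquation

open NumberField

theorem exists_finite_subset_forall_exists_eq {α β : Type*} {f : α → β} {s : Set α}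
    (h : (f '' s).Finite) : ∃ t ⊆ s, t.Finite ∧ ∀ x ∈ s, ∃ y ∈ t, f y = f x := by
  obtain ⟨t, hts, hbij⟩ := Set.exists_subset_bijOn s f
  exact ⟨t, hts, hbij.finite_iff_finite.2 h, fun x hx => hbij.surjOn ⟨x, hx, rfl⟩⟩

theorem exists_finite_forall_exists_eq_mul_pow (G : Type*) [CommGroup G] [Group.FG G] {n : ℕ}
    (hn : n ≠ 0) : ∃ T : Set G, T.Finite ∧ ∀ u, ∃ t ∈ T, ∃ v, u = t * v ^ n := by
  have : Finite (G ⧸ (powMonoidHom n : G →* G).range) :=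
    CommGroup.finite_of_fg_isMulTorsion _
      (CommGroup.isMulTorsion_quotient_range_powMonoidHom _ hn)
  obtain ⟨T, -, hT, hrep⟩ := exists_finite_subset_forall_exists_eq (s := Set.univ)
    (f := (QuotientGroup.mk : G → G ⧸ (powMonoidHom n : G →* G).range)) (Set.toFinite _)
  refine ⟨T, hT, fun u => ?_⟩
  obtain ⟨t, ht, htu⟩ := hrep u (Set.mem_univ u)
  obtain ⟨v, hv⟩ := QuotientGroup.eq.1 htu
  exact ⟨t, ht, v, by rw [← powMonoidHom_apply, hv, mul_inv_cancel_left]⟩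

theorem exists_finite_forall_dvd_exists_eq_mul_pow {R : Type*} [CommRing R] [IsDedekindDomain R]
    [Group.FG Rˣ] {n : ℕ} (hn : n ≠ 0) {D : R} (hD : D ≠ 0) :
    ∃ G : Set R, G.Finite ∧ ∀ e, e ∣ D → ∃ g ∈ G, ∃ v : Rˣ, e = g * v ^ n := by
  obtain ⟨T, hT, hunits⟩ := exists_finite_forall_exists_eq_mul_pow Rˣ hn
  have hideals : {I : Ideal R | I ∣ Ideal.span {D}}.Finite :=
    have := UniqueFactorizationMonoid.fintypeSubtypeDvd (Ideal.span {D}) (by simpa using hD)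
    Set.finite_coe_iff.1 this.finite
  obtain ⟨E, -, hE, hrep⟩ := exists_finite_subset_forall_exists_eq (s := {e : R | e ∣ D})
    (f := fun e => Ideal.span {e}) <| hideals.subset <| by
      rintro _ ⟨e, he, rfl⟩
      exact Ideal.dvd_iff_le.2 (Ideal.span_singleton_le_span_singleton.2 he)
  refine ⟨Set.image2 (fun e (t : Rˣ) => e * t) E T, hE.image2 _ hT, fun e he => ?_⟩
  obtain ⟨e', he', hspan⟩ := hrep e he
  obtain ⟨u, rfl⟩ := Ideal.span_singleton_eq_span_singleton.1 hspan
  obtain ⟨t, ht, v, rfl⟩ := hunits u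
  exact ⟨e' * t, ⟨e', he', t, ht, rfl⟩, v, by push_cast; ring⟩

variable {K : Type*} [Field K] [NumberField K]

theorem finite_setOf_div_of_add_eq_of_dvd {D : 𝓞 K} (hD : D ≠ 0) :
    {r : K | ∃ e₁ e₂ e₃ : 𝓞 K, e₁ + e₂ = e₃ ∧ e₁ ∣ D ∧ e₂ ∣ D ∧ e₃ ∣ D ∧ r = e₁ / e₃}.Finite := by
  have : Group.FG (𝓞 K)ˣ := Group.fg_iff_monoid_fg.2 inferInstance
  obtain ⟨G, hG, hdvd⟩ := exists_finite_forall_dvd_exists_eq_mul_pow three_ne_zero hD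
  have hG' := hG.subset (Set.sep_subset G (· ≠ 0))
  refine ((hG'.prod (hG'.prod hG')).biUnion fun g hg =>
    (finite_setOf_thue le_rfl hg.1.2 (neg_ne_zero.2 hg.2.1.2) hg.2.2.2).image
      fun p => (g.1 * p.1 ^ 3 / g.2.2 : K)).subset ?_
  rintro r ⟨e₁, e₂, e₃, hadd, h₁, h₂, h₃, rfl⟩
  obtain ⟨g₁, hg₁, v₁, hv₁⟩ := hdvd e₁ h₁
  obtain ⟨g₂, hg₂, v₂, hv₂⟩ := hdvd e₂ h₂
  obtain ⟨g₃, hg₃, v₃, hv₃⟩ := hdvd e₃ h₃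
  have hne {e g : 𝓞 K} {v : (𝓞 K)ˣ} (he : e ∣ D) (hev : e = g * v ^ 3) : g ≠ 0 := by
    rintro rfl
    exact ne_zero_of_dvd_ne_zero hD he (by rw [hev, zero_mul])
  refine Set.mem_biUnion (x := (g₁, g₂, g₃))
    ⟨⟨hg₁, hne h₁ hv₁⟩, ⟨hg₂, hne h₂ hv₂⟩, hg₃, hne h₃ hv₃⟩
    ⟨((v₁ * v₃⁻¹ : (𝓞 K)ˣ), (v₂ * v₃⁻¹ : (𝓞 K)ˣ)), ?_, ?_⟩
  · have hinv : (v₃ : 𝓞 K) ^ 3 * (v₃⁻¹ : (𝓞 K)ˣ) ^ 3 = 1 := by rw [← mul_pow]; simp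
    change g₁ * _ ^ 3 - -g₂ * _ ^ 3 = g₃
    push_cast
    linear_combination (v₃⁻¹ : (𝓞 K)ˣ) ^ 3 * (hadd - hv₁ - hv₂ + hv₃) + g₃ * hinv
  · have hv : ((v₃ : 𝓞 K) : K) ≠ 0 := by simp
    have hg : (g₃ : K) ≠ 0 := by simpa using hne h₃ hv₃
    have hinv : (((v₃⁻¹ : (𝓞 K)ˣ) : 𝓞 K) : K) = ((v₃ : 𝓞 K) : K)⁻¹ :=
      eq_inv_of_mul_eq_one_right (by rw [← map_mul]; simp)
    rw [hv₃, hv₁]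
    simp only [Units.val_mul, map_mul, map_pow, hinv]
    field_simp

theorem finite_setOf_isSquare_sub₃ {β₁ β₂ β₃ : 𝓞 K} (h₁₂ : β₁ ≠ β₂) (h₁₃ : β₁ ≠ β₃)
    (h₂₃ : β₂ ≠ β₃) :
    {x : 𝓞 K | IsSquare (x - β₁) ∧ IsSquare (x - β₂) ∧ IsSquare (x - β₃)}.Finite := by
  have hD : (β₂ - β₁) * (β₃ - β₂) * (β₃ - β₁) ≠ 0 :=
    mul_ne_zero (mul_ne_zero (sub_ne_zero.2 h₁₂.symm) (sub_ne_zero.2 h₂₃.symm))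
      (sub_ne_zero.2 h₁₃.symm)
  have hratios := finite_setOf_div_of_add_eq_of_dvd hD
  refine (((hratios.prod hratios).image fun r : K × K =>
    (β₁ + (β₂ - β₁) * (r.1 + r.2) ^ 2 / (4 * r.1 * r.2) : K)).preimage
      RingOfIntegers.coe_injective.injOn).subset ?_
  rintro x ⟨⟨η₁, h₁⟩, ⟨η₂, h₂⟩, ⟨η₃, h₃⟩⟩
  have hη₁₂ : (η₁ - η₂) * (η₁ + η₂) = β₂ - β₁ := by linear_combination h₂ - h₁
  have hη₂₃ : (η₂ - η₃) * (η₂ + η₃) = β₃ - β₂ := by linear_combination h₃ - h₂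
  have hη₁₃ : (η₁ - η₃) * (η₁ + η₃) = β₃ - β₁ := by linear_combination h₃ - h₁
  have hdvd : η₁ - η₃ ∣ (β₂ - β₁) * (β₃ - β₂) * (β₃ - β₁) :=
    Dvd.dvd.mul_left ⟨_, hη₁₃.symm⟩ _
  refine ⟨(((η₁ - η₂ : 𝓞 K) : K) / (η₁ - η₃ : 𝓞 K), ((η₁ + η₂ : 𝓞 K) : K) / (η₁ - η₃ : 𝓞 K)),
    ⟨⟨η₁ - η₂, η₂ - η₃, η₁ - η₃, by ring, ?_, ?_, hdvd, rfl⟩,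
      ⟨η₁ + η₂, -(η₂ + η₃), η₁ - η₃, by ring, ?_, ?_, hdvd, rfl⟩⟩, ?_⟩
  · exact ((Dvd.intro _ hη₁₂).mul_right _).mul_right _
  · exact ((Dvd.intro _ hη₂₃).mul_left _).mul_right _
  · exact ((Dvd.intro_left _ hη₁₂).mul_right _).mul_right _
  · exact neg_dvd.2 (((Dvd.intro_left _ hη₂₃).mul_left _).mul_right _)
  · have hη₁₂_ne : (η₁ - η₂) * (η₁ + η₂) ≠ 0 := by rwa [hη₁₂, sub_ne_zero, ne_comm]
    have hη₁₃_ne : η₁ - η₃ ≠ 0 := left_ne_zero_of_mul (b := η₁ + η₃) (by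
      rwa [hη₁₃, sub_ne_zero, ne_comm])
    have hcoe_ne {z : 𝓞 K} (hz : z ≠ 0) : (z : K) ≠ 0 := RingOfIntegers.coe_ne_zero_iff.2 hz
    have hsub := hcoe_ne (left_ne_zero_of_mul hη₁₂_ne)
    have hadd := hcoe_ne (right_ne_zero_of_mul hη₁₂_ne)
    have hden := hcoe_ne hη₁₃_ne
    have hcoe₁₂ := congrArg (algebraMap (𝓞 K) K) hη₁₂
    have hcoe₁ := congrArg (algebraMap (𝓞 K) K) h₁
    simp only [map_mul, map_sub, map_add] at hsub hadd hden hcoe₁₂ hcoe₁ ⊢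
    rw [← hcoe₁₂]
    field_simp
    linear_combination -4 * hcoe₁

end UnitEquation

section Kummer

open UniqueFactorizationMonoid

section OddPrimeFactors

variable {α : Type*} [CommMonoidWithZero α] [UniqueFactorizationMonoid α]
  [NormalizationMonoid α] [DecidableEq α]

/-- The normalized primes that divide `a` to an odd power, that is, the primes obstructing `a` from
being a square up to a unit. It is empty for `a = 0`. -/
noncomputable def oddPrimeFactors (a : α) : Finset α :=
  {p ∈ (normalizedFactors a).toFinset | Odd ((normalizedFactors a).count p)}

theorem exists_associated_prod_oddPrimeFactors_mul_sq {a : α} (ha : a ≠ 0) :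
    ∃ b, Associated a ((∏ p ∈ oddPrimeFactors a, p) * b ^ 2) := by
  set m := normalizedFactors a with hm
  refine ⟨∏ p ∈ m.toFinset, p ^ (m.count p / 2), ?_⟩
  have hprod : (∏ p ∈ oddPrimeFactors a, p) * (∏ p ∈ m.toFinset, p ^ (m.count p / 2)) ^ 2 =
      m.prod := by
    rw [oddPrimeFactors, ← hm, Finset.prod_filter, ← Finset.prod_pow, ← Finset.prod_mul_distrib,
      Finset.prod_multiset_count]
    refine Finset.prod_congr rfl fun p _ => ?_
    rw [← pow_mul]
    split_ifs with hodd
    · rw [← pow_succ', Nat.div_two_mul_two_add_one_of_odd hodd]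
    · rw [one_mul, Nat.div_two_mul_two_of_even (Nat.not_odd_iff_even.1 hodd)]
  exact hprod ▸ (prod_normalizedFactors ha).symm

theorem oddPrimeFactors_subset_of_isSquare {a b c d : α} (ha : a ≠ 0) (hb : b ≠ 0) (hc : c ≠ 0)
    (hd : d ≠ 0) (hsq : IsSquare (c * (a * b))) (hab : ∀ p, p ∣ a → p ∣ b → p ∣ d) :
    oddPrimeFactors a ⊆ (normalizedFactors (c * d)).toFinset := by
  intro p hp
  obtain ⟨hpa, hodd⟩ := Finset.mem_filter.1 hp
  rw [Multiset.mem_toFinset] at hpa ⊢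
  obtain ⟨r, hr⟩ := hsq
  have hr0 : r ≠ 0 := left_ne_zero_of_mul (hr ▸ mul_ne_zero hc (mul_ne_zero ha hb))
  have hcount := congrArg (fun x => (normalizedFactors x).count p) hr
  simp only [normalizedFactors_mul hc (mul_ne_zero ha hb), normalizedFactors_mul ha hb,
    normalizedFactors_mul hr0 hr0, Multiset.count_add] at hcount
  rw [normalizedFactors_mul hc hd, Multiset.mem_add]
  refine or_iff_not_imp_left.2 fun hpc => ?_
  rw [Multiset.count_eq_zero_of_notMem hpc, zero_add] at hcount
  have hpb : p ∈ normalizedFactors b :=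
    Multiset.count_pos.1 (Nat.pos_of_ne_zero fun h0 => by rw [h0] at hcount; grind)
  have hpd := hab p (dvd_of_mem_normalizedFactors hpa) (dvd_of_mem_normalizedFactors hpb)
  exact (mem_normalizedFactors_iff' hd).2
    ⟨irreducible_of_normalized_factor p hpa, normalize_normalized_factor p hpa, hpd⟩

end OddPrimeFactors

theorem isSquare_of_isSquare_sq_mul {R : Type*} [CommRing R] [IsDomain R]
    [IsIntegrallyClosed R] {s x : R} (hs : s ≠ 0) (h : IsSquare (s ^ 2 * x)) : IsSquare x := by
  obtain ⟨r, hr⟩ := h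
  obtain ⟨t, rfl⟩ := (IsIntegrallyClosed.pow_dvd_pow_iff two_ne_zero).1
    (Dvd.intro x (hr.trans (sq r).symm))
  exact ⟨t, mul_left_cancel₀ (pow_ne_zero 2 hs) (by rw [hr]; ring)⟩

variable {R : Type*} [CommRing R] [IsDedekindDomain R]

theorem exists_units_isSquare_mul_of_mk0_eq_mk0 {a z : R} {J : Ideal R}
    {I I' : nonZeroDivisors (Ideal R)} (ha : Ideal.span {a} = J * (I : Ideal R) ^ 2)
    (hz : Ideal.span {z} = J * (I' : Ideal R) ^ 2) (hclass : ClassGroup.mk0 I = ClassGroup.mk0 I') :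
    ∃ v : Rˣ, IsSquare (v * (a * z)) := by
  obtain ⟨y, x, -, hx, hxy⟩ := ClassGroup.mk0_eq_mk0_iff.1 hclass
  have hspan : Ideal.span {y ^ 2 * a} = Ideal.span {x ^ 2 * z} := by
    simp only [← Ideal.span_singleton_mul_span_singleton, ← Ideal.span_singleton_pow]
    rw [ha, hz, mul_left_comm, ← mul_pow, hxy, mul_pow, mul_left_comm]
  obtain ⟨v, hv⟩ := Ideal.span_singleton_eq_span_singleton.1 hspan
  refine ⟨v, isSquare_of_isSquare_sq_mul hx ⟨v * a * y, ?_⟩⟩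
  linear_combination -(v : R) * a * hv

variable [Finite (ClassGroup R)] [Group.FG Rˣ]

open Classical in
theorem exists_finite_forall_isSquare_mul_of_oddPrimeFactors_subset (S : Finset (Ideal R)) :
    ∃ T : Set R, T.Finite ∧ 0 ∉ T ∧ ∀ z ≠ 0, oddPrimeFactors (Ideal.span {z}) ⊆ S →
      ∃ κ ∈ T, IsSquare (κ * z) := by
  have hsplit (z : R) (hz : z ≠ 0) : ∃ I : nonZeroDivisors (Ideal R),
      Ideal.span {z} = (∏ P ∈ oddPrimeFactors (Ideal.span {z}), P) * (I : Ideal R) ^ 2 := by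
    have hspan : Ideal.span {z} ≠ 0 := by simpa using hz
    obtain ⟨I, hI⟩ := exists_associated_prod_oddPrimeFactors_mul_sq hspan
    refine ⟨⟨I, mem_nonZeroDivisors_of_ne_zero ?_⟩, associated_iff_eq.1 hI⟩
    rintro rfl
    exact hspan ((associated_iff_eq.1 hI).trans (by simp))
  choose! I hI using hsplit
  obtain ⟨A, hAsub, hA, hrep⟩ := exists_finite_subset_forall_exists_eq
    (s := {z : R | z ≠ 0 ∧ oddPrimeFactors (Ideal.span {z}) ⊆ S})
    (f := fun z => (oddPrimeFactors (Ideal.span {z}), ClassGroup.mk0 (I z))) <|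
      (S.powerset.finite_toSet.prod Set.finite_univ).subset <| by
        rintro _ ⟨z, ⟨-, hz⟩, rfl⟩
        exact ⟨Finset.mem_powerset.2 hz, Set.mem_univ _⟩
  obtain ⟨U, hU, hunits⟩ := exists_finite_forall_exists_eq_mul_pow Rˣ two_ne_zero
  refine ⟨Set.image2 (fun (u : Rˣ) a => u * a) U A, hU.image2 _ hA, ?_, fun z hz hzS => ?_⟩
  · rintro ⟨u, -, a, ha, hua⟩
    exact (hAsub ha).1 (u.mul_right_eq_zero.1 hua)
  obtain ⟨a, ha, hinv⟩ := hrep z ⟨hz, hzS⟩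
  obtain ⟨hodd, hclass⟩ := Prod.mk.inj hinv
  obtain ⟨v, hv⟩ := exists_units_isSquare_mul_of_mk0_eq_mk0
    (hodd ▸ hI a (hAsub ha).1) (hI z hz) hclass
  obtain ⟨u, hu, w, rfl⟩ := hunits v
  refine ⟨u * a, ⟨u, hu, a, ha, rfl⟩, isSquare_of_isSquare_sq_mul w.ne_zero ?_⟩
  convert hv using 1
  push_cast
  ring

theorem exists_finite_forall_isSquare_mul_of_dvd_sub {c d : R} (hc : c ≠ 0) (hd : d ≠ 0) :
    ∃ T : Set R, T.Finite ∧ 0 ∉ T ∧ ∀ z w, z ≠ 0 → w ≠ 0 → IsSquare (c * (z * w)) → z ∣ w - d →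
      ∃ κ ∈ T, IsSquare (κ * z) := by
  classical
  obtain ⟨T, hT, hT0, hsq⟩ := exists_finite_forall_isSquare_mul_of_oddPrimeFactors_subset
    (normalizedFactors (Ideal.span {c} * Ideal.span {d})).toFinset
  have hspan {x : R} (hx : x ≠ 0) : Ideal.span {x} ≠ 0 := by simpa using hx
  refine ⟨T, hT, hT0, fun z w hz hw ⟨r, hr⟩ hdvd => hsq z hz ?_⟩
  refine oddPrimeFactors_subset_of_isSquare (hspan hz) (hspan hw) (hspan hc) (hspan hd)
    ⟨Ideal.span {r}, by simp only [Ideal.span_singleton_mul_span_singleton, hr]⟩ fun P hPz hPw => ?_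
  rw [Ideal.dvd_span_singleton] at *
  rw [← sub_sub_cancel w d]
  exact P.sub_mem hPw (P.mem_of_dvd hdvd hPz)

end Kummer

section Siegel

open NumberField Polynomial

universe u

theorem exists_numberField_extension_splits {K : Type u} [Field K] [NumberField K] (g : K[X]) :
    ∃ (L : Type u) (_ : Field L) (_ : NumberField L) (_ : Algebra K L),
      (g.map (algebraMap K L)).Splits := by
  have : CharZero g.SplittingField :=
    charZero_of_injective_algebraMap (algebraMap K g.SplittingField).injective
  exact ⟨g.SplittingField, inferInstance, .of_module_finite K g.SplittingField, inferInstance,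
    SplittingField.splits g⟩

theorem isSquare_of_isSquare_algebraMap {R K : Type*} [CommRing R] [IsIntegrallyClosed R] [Field K]
    [Algebra R K] [IsFractionRing R K] {x : R} (h : IsSquare (algebraMap R K x)) : IsSquare x := by
  obtain ⟨r, hr⟩ := h
  obtain ⟨y, rfl⟩ := IsIntegrallyClosed.exists_algebraMap_eq_of_isIntegral_pow (R := R) (x := r)
    two_pos (by rw [sq, ← hr]; exact isIntegral_algebraMap)
  exact ⟨y, IsFractionRing.injective R K (by rw [hr, map_mul])⟩

theorem exists_numberField_extension_forall_isSquare {K : Type u} [Field K] [NumberField K]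
    {T : Set (𝓞 K)} (hT : T.Finite) :
    ∃ (L : Type u) (_ : Field L) (_ : NumberField L) (_ : Algebra K L),
      ∀ κ ∈ T, IsSquare (algebraMap (𝓞 K) (𝓞 L) κ) := by
  obtain ⟨L, _, _, _, hsplits⟩ := exists_numberField_extension_splits
    (∏ κ ∈ hT.toFinset, (X ^ 2 - C (κ : K)))
  refine ⟨L, _, ‹_›, ‹_›, fun κ hκ => isSquare_of_isSquare_algebraMap (K := L) ?_⟩
  have hne (κ : K) : X ^ 2 - C κ ≠ 0 := X_pow_sub_C_ne_zero two_pos κ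
  have hfactor : ((X ^ 2 - C (κ : K)).map (algebraMap K L)).Splits := by
    refine hsplits.of_dvd ((Polynomial.map_ne_zero_iff (algebraMap K L).injective).2
      (Finset.prod_ne_zero_iff.2 fun κ _ => hne κ)) (Polynomial.map_dvd _ ?_)
    exact Finset.dvd_prod_of_mem (fun κ : 𝓞 K => X ^ 2 - C (κ : K)) (hT.mem_toFinset.2 hκ)
  obtain ⟨r, hr⟩ := hfactor.exists_eval_eq_zero (by
    rw [degree_map, degree_X_pow_sub_C two_pos]; norm_num)
  refine ⟨r, ?_⟩
  rw [Polynomial.map_sub, Polynomial.map_pow, map_X, map_C, eval_sub, eval_pow, eval_X, eval_C,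
    sub_eq_zero, sq] at hr
  exact hr.symm

theorem exists_finite_forall_isSquare_mul_sub {R : Type*} [CommRing R] [IsDedekindDomain R]
    [Finite (ClassGroup R)] [Group.FG Rˣ] {s : Finset R} {c β : R} (hc : c ≠ 0) (hβ : β ∈ s) :
    ∃ T : Set R, T.Finite ∧ 0 ∉ T ∧ ∀ x ∉ s, IsSquare (c * ∏ γ ∈ s, (x - γ)) →
      ∃ κ ∈ T, IsSquare (κ * (x - β)) := by
  classical
  obtain ⟨T, hT, hT0, hsq⟩ := exists_finite_forall_isSquare_mul_of_dvd_sub hc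
    (d := ∏ γ ∈ s.erase β, (β - γ)) (Finset.prod_ne_zero_iff.2 fun γ hγ =>
      sub_ne_zero.2 (Finset.ne_of_mem_erase hγ).symm)
  refine ⟨T, hT, hT0, fun x hxs hx => ?_⟩
  have hne {γ : R} (hγ : γ ∈ s) : x - γ ≠ 0 := sub_ne_zero.2 fun h => hxs (h ▸ hγ)
  have hdvd := sub_dvd_eval_sub x β (∏ γ ∈ s.erase β, (X - C γ))
  simp only [eval_prod, eval_sub, eval_X, eval_C] at hdvd
  refine hsq (x - β) (∏ γ ∈ s.erase β, (x - γ)) (hne hβ)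
    (Finset.prod_ne_zero_iff.2 fun γ hγ => hne (Finset.mem_of_mem_erase hγ)) ?_ hdvd
  rwa [Finset.mul_prod_erase s (x - ·) hβ]

theorem finite_setOf_isSquare_mul_prod_sub {K : Type*} [Field K] [NumberField K] {s : Finset (𝓞 K)}
    (hs : 2 < s.card) {c : 𝓞 K} (hc : c ≠ 0) :
    {x : 𝓞 K | IsSquare (c * ∏ β ∈ s, (x - β))}.Finite := by
  have : Group.FG (𝓞 K)ˣ := Group.fg_iff_monoid_fg.2 inferInstance
  choose! T hT hT0 hTsq using fun β (hβ : β ∈ s) => exists_finite_forall_isSquare_mul_sub hc hβ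
  obtain ⟨L, _, _, _, hL⟩ := exists_numberField_extension_forall_isSquare
    (s.finite_toSet.biUnion hT)
  have hinj : Function.Injective (algebraMap (𝓞 K) (𝓞 L)) :=
    RingOfIntegers.algebraMap.injective K L
  have hsq {x : 𝓞 K} (hx : IsSquare (c * ∏ β ∈ s, (x - β))) (hxs : x ∉ s) {β : 𝓞 K} (hβ : β ∈ s) :
      IsSquare (algebraMap (𝓞 K) (𝓞 L) x - algebraMap (𝓞 K) (𝓞 L) β) := by
    obtain ⟨κ, hκ, hκsq⟩ := hTsq β hβ x hxs hx
    obtain ⟨r, hr⟩ := hL κ (Set.mem_biUnion hβ hκ)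
    have hr0 : r ≠ 0 := by
      rintro rfl
      rw [mul_zero, map_eq_zero_iff _ hinj] at hr
      exact hT0 β hβ (hr ▸ hκ)
    refine isSquare_of_isSquare_sq_mul hr0 ?_
    rw [sq, ← hr, ← map_sub, ← map_mul]
    exact hκsq.map (algebraMap (𝓞 K) (𝓞 L))
  obtain ⟨β₁, hβ₁, β₂, hβ₂, β₃, hβ₃, h₁₂, h₁₃, h₂₃⟩ := Finset.two_lt_card.1 hs
  refine (s.finite_toSet.union ((finite_setOf_isSquare_sub₃ (hinj.ne h₁₂) (hinj.ne h₁₃)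
    (hinj.ne h₂₃)).preimage hinj.injOn)).subset fun x hx => or_iff_not_imp_left.2 fun hxs => ?_
  exact ⟨hsq hx hxs hβ₁, hsq hx hxs hβ₂, hsq hx hxs hβ₃⟩

theorem exists_forall_mul_prod_sub_eq_pow_mul_eval {K : Type*} [Field K] [NumberField K] {f : K[X]}
    (hf : Squarefree f) (hsplits : f.Splits) :
    ∃ d : ℤ, d ≠ 0 ∧ ∃ a : 𝓞 K, a ≠ 0 ∧ ∃ s : Finset (𝓞 K), s.card = f.natDegree ∧ ∀ x : 𝓞 K,
      algebraMap (𝓞 K) K (a * ∏ β ∈ s, (d * x - β)) = d ^ (f.natDegree + 1) * f.eval (x : K) := by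
  classical
  let roots : Finset K := ⟨f.roots, nodup_roots (PerfectField.separable_iff_squarefree.2 hf)⟩
  have hcard : roots.card = f.natDegree := hsplits.natDegree_eq_card_roots.symm
  obtain ⟨d, hd, hintegral⟩ := exists_integral_multiples ℤ ℚ (insert f.leadingCoeff roots)
  have hdK : (d : K) ≠ 0 := Int.cast_ne_zero.2 hd
  have hlift (α : K) (hα : α ∈ insert f.leadingCoeff roots) :
      ∃ β : 𝓞 K, algebraMap (𝓞 K) K β = d * α :=
    ⟨⟨d • α, hintegral α hα⟩, zsmul_eq_mul α d⟩
  choose! β hβ using hlift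
  have hlead := hβ f.leadingCoeff (Finset.mem_insert_self _ _)
  have hroot {α : K} (hα : α ∈ roots) := hβ α (Finset.mem_insert_of_mem hα)
  have hβinj : Set.InjOn β roots := fun α hα α' hα' h => mul_left_cancel₀ hdK <| by
    rw [← hroot hα, ← hroot hα', h]
  refine ⟨d, hd, β f.leadingCoeff, RingOfIntegers.coe_ne_zero_iff.1 ?_, roots.image β,
    (Finset.card_image_of_injOn hβinj).trans hcard, fun x => ?_⟩
  · exact hlead ▸ mul_ne_zero hdK (leadingCoeff_ne_zero.2 hf.ne_zero)
  have heval : f.eval (x : K) = f.leadingCoeff * ∏ α ∈ roots, (x - α : K) :=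
    hsplits.eval_eq_prod_roots _
  have hprod : ∏ α ∈ roots, (d * x - algebraMap (𝓞 K) K (β α)) =
      d ^ f.natDegree * ∏ α ∈ roots, (x - α : K) := by
    rw [← hcard, ← Finset.prod_const, ← Finset.prod_mul_distrib]
    exact Finset.prod_congr rfl fun α hα => by rw [hroot hα, mul_sub]
  rw [Finset.prod_image hβinj, heval]
  simp only [map_mul, map_prod, map_sub, map_intCast, hlead, hprod]
  ring

theorem finite_setOf_isSquare_eval_of_splits {K : Type*} [Field K] [NumberField K] {f : K[X]}
    (hf : Squarefree f) (hdeg : 3 ≤ f.natDegree) (hsplits : f.Splits) :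
    {x : 𝓞 K | IsSquare (f.eval (x : K))}.Finite := by
  obtain ⟨d, hd, a, ha, s, hs, heq⟩ := exists_forall_mul_prod_sub_eq_pow_mul_eval hf hsplits
  have hd' : (d : 𝓞 K) ≠ 0 := Int.cast_ne_zero.2 hd
  refine ((finite_setOf_isSquare_mul_prod_sub (hs ▸ hdeg)
    (mul_ne_zero (pow_ne_zero (f.natDegree + 1) hd') ha)).preimage
      (mul_right_injective₀ hd').injOn).subset ?_
  rintro x ⟨y, hy⟩
  refine isSquare_of_isSquare_algebraMap (K := K) ⟨d ^ (f.natDegree + 1) * y, ?_⟩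
  beta_reduce
  rw [mul_assoc, map_mul, heq, hy, map_pow, map_intCast]
  ring

theorem finite_setOf_isSquare_eval {K : Type*} [Field K] [NumberField K] {f : K[X]}
    (hf : Squarefree f) (hdeg : 3 ≤ f.natDegree) :
    {x : 𝓞 K | IsSquare (f.eval (x : K))}.Finite := by
  obtain ⟨L, _, _, _, hsplits⟩ := exists_numberField_extension_splits f
  have hsep := (PerfectField.separable_iff_squarefree.2 hf).map (f := algebraMap K L)
  refine ((finite_setOf_isSquare_eval_of_splits hsep.squarefree (by rwa [natDegree_map])
    hsplits).preimage (f := algebraMap (𝓞 K) (𝓞 L))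
      (RingOfIntegers.algebraMap.injective K L).injOn).subset fun x hx => ?_
  have hmap : (f.map (algebraMap K L)).eval (algebraMap (𝓞 K) (𝓞 L) x : L) =
      algebraMap K L (f.eval (x : K)) := eval_map_apply (algebraMap K L) (x : K)
  exact (congrArg IsSquare hmap).mpr (hx.out.map (algebraMap K L))

theorem siegel_hyperelliptic_general {K : Type*} [Field K] [NumberField K] (f : K[X])
    (hf : Squarefree f) (hdeg : 3 ≤ f.natDegree) :
    {p : 𝓞 K × 𝓞 K | (p.2 : K) ^ 2 = f.eval (p.1 : K)}.Finite := by
  refine Set.Finite.of_finite_fibers Prod.fst ((finite_setOf_isSquare_eval hf hdeg).subset ?_)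
    fun x _ => ?_
  · rintro _ ⟨p, hp, rfl⟩
    exact ⟨p.2, by rw [← hp.out, sq]⟩
  · have hroots := (finite_setOf_mul_pow_eq two_ne_zero one_ne_zero (f.eval (x : K))).preimage
      RingOfIntegers.coe_injective.injOn
    refine ((Set.finite_singleton x).prod hroots).subset ?_
    rintro p ⟨hp, rfl⟩
    exact ⟨rfl, (one_mul _).trans hp⟩

theorem squarefree_map_algebraMap_fractionField {R K : Type*} [CommRing R] [IsDomain R]
    [NormalizedGCDMonoid R] [Field K] [Algebra R K] [IsFractionRing R K] {f : R[X]}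
    (hf : Squarefree f) : Squarefree (f.map (algebraMap R K)) := by
  intro q hq
  have hq0 : q ≠ 0 := by
    rintro rfl
    rw [mul_zero, zero_dvd_iff,
      Polynomial.map_eq_zero_iff (FaithfulSMul.algebraMap_injective R K)] at hq
    exact hf.ne_zero hq
  set n := IsLocalization.integerNormalization (nonZeroDivisors R) q
  obtain ⟨b, hb, hbq⟩ := IsLocalization.integerNormalization_spec (nonZeroDivisors R) q
  have hdvd : n.primPart.map (algebraMap R K) ∣ q := by
    have hunit : IsUnit (C (algebraMap R K b)) :=
      isUnit_C.2 (IsLocalization.map_units K (⟨b, hb⟩ : nonZeroDivisors R))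
    refine (hunit.dvd_mul_left).1 ?_
    rw [← smul_eq_C_mul, algebraMap_smul, ← hbq]
    exact Polynomial.map_dvd _ n.primPart_dvd
  have hsq : n.primPart * n.primPart ∣ f := by
    refine (n.isPrimitive_primPart.mul
      n.isPrimitive_primPart).dvd_of_fraction_map_dvd_fraction_map (K := K) ?_
    rw [Polynomial.map_mul]
    exact (mul_dvd_mul hdvd hdvd).trans hq
  exact isUnit_or_eq_zero_of_isUnit_integerNormalization_primPart hq0 (hf _ hsq)

end Siegel

/-- Siegel's theorem on integral points on hyperelliptic curves: if `f` is a squarefree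
polynomial with integer coefficients of degree at least 3, then the set of integer pairs
`(x, y)` with `y² = f(x)` is finite. -/
theorem siegel_hyperelliptic (f : Polynomial ℤ) (hf : Squarefree f) (hdeg : 3 ≤ f.natDegree) :
    {p : ℤ × ℤ | p.2 ^ 2 = f.eval p.1}.Finite := by
  have hinj : Function.Injective (algebraMap ℤ ℚ) := (algebraMap ℤ ℚ).injective_int
  have hfin := siegel_hyperelliptic_general (f.map (algebraMap ℤ ℚ))
    (squarefree_map_algebraMap_fractionField hf)
    (by rwa [Polynomial.natDegree_map_eq_of_injective hinj])
  have hcast : Function.Injective (Int.cast : ℤ → NumberField.RingOfIntegers ℚ) :=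
    Int.cast_injective
  refine (hfin.preimage (hcast.prodMap hcast).injOn).subset fun p hp => ?_
  have heval := Polynomial.eval_map_apply (p := f) (algebraMap ℤ ℚ) p.1
  rw [← hp.out] at heval
  simpa using heval.symm
end
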